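/- arXiv:math/0511401 — 2 statements merged into one kernel-verified Lean document; each statement's English description precedes it below -/
import Mathlib

section
/- Let c satisfy [H1] and [H2]. For κ > 0 let u₁(·,iκ) be the real-valued Jost solution from +∞ at k = iκ, set w(x,iκ) = −u₁'(x,iκ)/(κ u₁(x,iκ)) and r(x,iκ) = (1 − w(x,iκ))/(1 + w(x,iκ)). Then ∫_ℝ | q(x) r(x,iκ) − Q(x)² | dx → 0 as κ → +∞, where q = 1 − 1/c² and Q = 1 − 1/c. -/
open MeasureTheory Filter Topology

noncomputable section

/-- Hypothesis [H1]: `c` is essentially bounded below away from `0` and bounded above. -/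
def HypH1 (c : ℝ → ℝ) : Prop :=
  ∃ c₀ > (0 : ℝ), ∃ cM > (0 : ℝ), ∀ᵐ x : ℝ, c₀ < c x ∧ c x ≤ cM

/-- Hypothesis [H1] with explicit constants `c₀`, `cM`. -/
def HypH1c (c : ℝ → ℝ) (c₀ cM : ℝ) : Prop :=
  0 < c₀ ∧ 0 < cM ∧ ∀ᵐ x : ℝ, c₀ < c x ∧ c x ≤ cM

/-- Hypothesis [H2]: `|c(x) - 1| ≤ C ⟨x⟩^{-1-δ}` almost everywhere. -/
def HypH2 (c : ℝ → ℝ) : Prop :=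
  ∃ C > (0 : ℝ), ∃ δ > (0 : ℝ),
    ∀ᵐ x : ℝ, |c x - 1| ≤ C * (1 + x ^ 2) ^ (-(1 + δ) / 2)

/-- `u` is continuously differentiable, its derivative is locally absolutely continuous,
and `u'' + (k²/c²) u = 0` holds almost everywhere (equivalently, the integral formulation
of the second-order equation holds). -/
def SolvesHelmholtz (c : ℝ → ℝ) (k : ℂ) (u : ℝ → ℂ) : Prop :=
  ContDiff ℝ 1 u ∧
  ∀ a b : ℝ, deriv u b = deriv u a + ∫ x in a..b, -(k ^ 2 / ((c x : ℂ) ^ 2)) * u x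

/-- The Jost solution from `+∞` at `k` : `e^{-ikx} u(x) → 1` as `x → +∞`. -/
def IsJostPlus (c : ℝ → ℝ) (k : ℂ) (u : ℝ → ℂ) : Prop :=
  SolvesHelmholtz c k u ∧
  Tendsto (fun x : ℝ => Complex.exp (-(Complex.I * k * (x : ℂ))) * u x) atTop (𝓝 1)

/-- The Jost solution from `-∞` at `k` : `e^{ikx} u(x) → 1` as `x → -∞`. -/
def IsJostMinus (c : ℝ → ℝ) (k : ℂ) (u : ℝ → ℂ) : Prop :=
  SolvesHelmholtz c k u ∧
  Tendsto (fun x : ℝ => Complex.exp (Complex.I * k * (x : ℂ)) * u x) atBot (𝓝 1)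

/-- `q = 1 - 1/c²`. -/
def qfun (c : ℝ → ℝ) (x : ℝ) : ℝ := 1 - 1 / (c x) ^ 2

/-- `Q = 1 - 1/c`. -/
def Qfun (c : ℝ → ℝ) (x : ℝ) : ℝ := 1 - 1 / c x

/-- Real form of the equation at `k = iκ`: `u'' = (κ²/c²) u` a.e., with `u` of class `C¹`
with locally absolutely continuous derivative. -/
def SolvesHelmholtzR (c : ℝ → ℝ) (κ : ℝ) (u : ℝ → ℝ) : Prop :=
  ContDiff ℝ 1 u ∧
  ∀ a b : ℝ, deriv u b = deriv u a + ∫ x in a..b, (κ ^ 2 / (c x) ^ 2) * u x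

/-- The real-valued Jost solution from `+∞` at `k = iκ`: `e^{κx} u(x) → 1` as `x → +∞`. -/
def IsJostPlusR (c : ℝ → ℝ) (κ : ℝ) (u : ℝ → ℝ) : Prop :=
  SolvesHelmholtzR c κ u ∧
  Tendsto (fun x : ℝ => Real.exp (κ * x) * u x) atTop (𝓝 1)

/-- `w(x, iκ) = -u₁'(x, iκ)/(κ u₁(x, iκ))` built from a family of real Jost solutions. -/
def wIK (U : ℝ → ℝ → ℝ) (κ x : ℝ) : ℝ := -(deriv (U κ) x) / (κ * U κ x)

/-- `r(x, iκ) = (1 - w(x,iκ))/(1 + w(x,iκ))`. -/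
def rIK (U : ℝ → ℝ → ℝ) (κ x : ℝ) : ℝ := (1 - wIK U κ x) / (1 + wIK U κ x)

/-!
At `k = iκ` the Jost solution `u` solves `u'' = V u` with `V = κ²/c² ≥ 0` and decays at `+∞`.
As `(u u')' = u'² + V u² ≥ 0` and `u u'` tends to `0` along a sequence going to `+∞`, we get
`u u' ≤ 0`: so `|u|` is decreasing and `w ≥ 0`. Integrating the derivative of the Wronskian of `u`
and `t ↦ exp (-β (t - x))`, `β = κ/c(x)`, over `t > x`, using `|u(t)| ≤ |u(x)|` and substituting
`t = x + s/κ`, gives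
`|w(x, iκ) - 1/c(x)| ≤ ∫₀^∞ exp (-s/c(x)) |q(x + s/κ) - q(x)| ds`.
Since `c ≤ c_M`, Tonelli's theorem and the continuity of translations in `L¹` yield
`w(·, iκ) → 1/c` in `L¹`, and `q r - Q² = 2 Q (1/c - w)/(1 + w)`.
-/

lemma continuous_eLpNorm_translate_sub {G E : Type*} [AddGroup G] [TopologicalSpace G]
    [IsTopologicalAddGroup G] [MeasurableSpace G] [BorelSpace G] {μ : Measure G}
    [μ.IsAddLeftInvariant] [IsLocallyFiniteMeasure μ] [μ.InnerRegularCompactLTTop]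
    [NormedAddCommGroup E] {p : ENNReal} {f : G → E} (hp : 1 ≤ p) (hp_top : p ≠ ⊤)
    (hf : MemLp f p μ) : Continuous fun t => eLpNorm (fun x => f (t + x) - f x) p μ := by
  have : Fact (1 ≤ p) := ⟨hp⟩
  have : Fact (p ≠ ⊤) := ⟨hp_top⟩
  have hcont : Continuous fun t : G => edist (DomAddAct.mk t +ᵥ hf.toLp f) (hf.toLp f) :=
    (DomAddAct.continuous_mk.vadd continuous_const).edist continuous_const
  simp only [DomAddAct.mk_vadd_toLp, Lp.edist_toLp_toLp] at hcont
  exact hcont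

lemma eLpNorm_translate_sub_le {G E : Type*} [Add G] [MeasurableSpace G] [MeasurableAdd G]
    {μ : Measure G} [μ.IsAddLeftInvariant] [NormedAddCommGroup E] {p : ENNReal} {f : G → E}
    (hp : 1 ≤ p) (hf : AEStronglyMeasurable f μ) (t : G) :
    eLpNorm (fun x => f (t + x) - f x) p μ ≤ 2 * eLpNorm f p μ := by
  have ht := measurePreserving_add_left μ t
  calc eLpNorm (fun x => f (t + x) - f x) p μ
      ≤ eLpNorm (fun x => f (t + x)) p μ + eLpNorm f p μ :=
        eLpNorm_sub_le (hf.comp_measurePreserving ht) hf hp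
    _ = 2 * eLpNorm f p μ := by
        rw [show (fun x => f (t + x)) = f ∘ (t + ·) from rfl,
          eLpNorm_comp_measurePreserving hf ht, two_mul]

lemma tendsto_lintegral_mul_eLpNorm_translate_sub {E : Type*} [NormedAddCommGroup E]
    {p : ENNReal} {f : ℝ → E} {ν : Measure ℝ} {k : ℝ → ENNReal} (hp : 1 ≤ p) (hp_top : p ≠ ⊤)
    (hf : MemLp f p) (hk : AEMeasurable k ν) (hk_top : ∫⁻ s, k s ∂ν ≠ ⊤) :
    Tendsto (fun κ : ℝ => ∫⁻ s, k s * eLpNorm (fun x => f (s / κ + x) - f x) p ∂ν)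
      atTop (𝓝 0) := by
  have hcont := continuous_eLpNorm_translate_sub hp hp_top hf
  have hbound_top : 2 * eLpNorm f p ≠ ⊤ := ENNReal.mul_ne_top (by simp) hf.2.ne
  have hlim : ∀ᵐ s ∂ν, Tendsto
      (fun κ : ℝ => k s * eLpNorm (fun x => f (s / κ + x) - f x) p) atTop (𝓝 0) := by
    filter_upwards [ae_lt_top' hk hk_top] with s hs
    have hdiv : Tendsto (fun κ : ℝ => s / κ) atTop (𝓝 0) :=
      tendsto_const_nhds.div_atTop tendsto_id
    have hω : Tendsto (fun κ : ℝ => eLpNorm (fun x => f (s / κ + x) - f x) p) atTop (𝓝 0) := by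
      simpa [Function.comp_def] using (hcont.tendsto 0).comp hdiv
    simpa using ENNReal.Tendsto.const_mul hω (.inr hs.ne)
  rw [← lintegral_zero (μ := ν)]
  refine tendsto_lintegral_filter_of_dominated_convergence' (fun s => k s * (2 * eLpNorm f p))
    (.of_forall fun κ => ?_) (.of_forall fun κ => .of_forall fun s => ?_) ?_ hlim
  · exact hk.mul (hcont.comp (continuous_id.div_const κ)).measurable.aemeasurable
  · exact mul_le_mul_right (eLpNorm_translate_sub_le hp hf.1 _) _
  · rw [lintegral_mul_const'' _ hk]
    exact ENNReal.mul_ne_top hk_top hbound_top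

lemma lintegral_lintegral_mul_enorm_translate_sub {E : Type*} [NormedAddCommGroup E] {f : ℝ → E}
    {ν : Measure ℝ} [SFinite ν] {k : ℝ → ENNReal} (hf : AEStronglyMeasurable f)
    (hk : AEMeasurable k ν) (κ : ℝ) :
    ∫⁻ x, ∫⁻ s, k s * ‖f (s / κ + x) - f x‖ₑ ∂ν
      = ∫⁻ s, k s * eLpNorm (fun x => f (s / κ + x) - f x) 1 ∂ν := by
  have htranslate : Measure.QuasiMeasurePreserving (fun z : ℝ × ℝ => z.2 / κ + z.1)
      (volume.prod ν) volume :=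
    QuasiMeasurePreserving.prod_of_left (by fun_prop) <| .of_forall fun s =>
      (measurePreserving_add_left volume (s / κ)).quasiMeasurePreserving
  have hjoint : AEStronglyMeasurable (fun z : ℝ × ℝ => f (z.2 / κ + z.1) - f z.1)
      (volume.prod ν) :=
    (hf.comp_quasiMeasurePreserving htranslate).sub hf.comp_fst
  rw [lintegral_lintegral_swap (hk.comp_snd.mul hjoint.enorm)]
  congr 1 with s
  rw [eLpNorm_one_eq_lintegral_enorm, lintegral_const_mul'']
  exact ((hf.comp_measurePreserving (measurePreserving_add_left volume (s / κ))).sub hf).enorm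

lemma setLIntegral_Ioi_eq_comp_div_add {κ : ℝ} (hκ : 0 < κ) (x : ℝ) (F : ℝ → ENNReal) :
    ∫⁻ t in Set.Ioi x, F t = ‖κ⁻¹‖ₑ * ∫⁻ s in Set.Ioi 0, F (s / κ + x) := by
  have himage : (fun s => s / κ + x) '' Set.Ioi 0 = Set.Ioi x := by
    ext t
    refine ⟨?_, fun ht => ⟨(t - x) * κ, mul_pos (sub_pos.2 ht) hκ, by field_simp; ring⟩⟩
    rintro ⟨s, hs, rfl⟩
    exact lt_add_of_pos_left x (div_pos hs hκ)
  have hderiv (s : ℝ) : HasDerivAt (fun s => s / κ + x) κ⁻¹ s := by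
    simpa using ((hasDerivAt_id' s).div_const κ).add_const x
  have hinj : Set.InjOn (fun s => s / κ + x) (Set.Ioi 0) := fun s _ t _ hst => by
    simpa [hκ.ne'] using hst
  rw [← himage, lintegral_image_eq_lintegral_abs_deriv_mul measurableSet_Ioi
    (fun s _ => (hderiv s).hasDerivWithinAt) hinj, ← lintegral_const_mul' _ _ enorm_ne_top]
  simp only [Real.enorm_eq_ofReal_abs]

lemma intervalIntegrable_of_locallyIntegrable {E : Type*} [NormedAddCommGroup E] {f : ℝ → E}
    {μ : Measure ℝ} (hf : LocallyIntegrable f μ) (a b : ℝ) : IntervalIntegrable f μ a b :=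
  (hf.integrableOn_isCompact isCompact_uIcc).intervalIntegrable

lemma exists_seq_tendsto_deriv_zero {u : ℝ → ℝ} {l : ℝ} (hu : Differentiable ℝ u)
    (hl : Tendsto u atTop (𝓝 l)) :
    ∃ ξ : ℕ → ℝ, Tendsto ξ atTop atTop ∧ Tendsto (fun n => deriv u (ξ n)) atTop (𝓝 0) := by
  have hmean (n : ℕ) : ∃ ξ : ℝ, (n : ℝ) ≤ ξ ∧ deriv u ξ = u (n + 1) - u n := by
    obtain ⟨ξ, hξ, hslope⟩ := exists_deriv_eq_slope u (lt_add_one (n : ℝ))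
      hu.continuous.continuousOn hu.differentiableOn
    exact ⟨ξ, hξ.1.le, by simpa using hslope⟩
  choose ξ hξ hderiv using hmean
  refine ⟨ξ, tendsto_atTop_mono hξ tendsto_natCast_atTop_atTop, ?_⟩
  have hnat : Tendsto (fun n : ℕ => u n) atTop (𝓝 l) := hl.comp tendsto_natCast_atTop_atTop
  have hnext : Tendsto (fun n : ℕ => u (n + 1)) atTop (𝓝 l) :=
    hl.comp (tendsto_atTop_add_const_right _ 1 tendsto_natCast_atTop_atTop)
  simpa [hderiv] using hnext.sub hnat

lemma hasDerivAt_exp_neg_mul_sub (β x y : ℝ) :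
    HasDerivAt (fun y => Real.exp (-(β * (y - x)))) (-β * Real.exp (-(β * (y - x)))) y := by
  have hlin : HasDerivAt (fun y => -(β * (y - x))) (-(β * 1)) y :=
    (((hasDerivAt_id' y).sub_const x).const_mul β).fun_neg
  exact hlin.exp.congr_deriv (by ring)

/-- `u` is a solution of `u'' = V u` in the sense of Carathéodory: of class `C¹`, the equation
holding in integrated form.  For `V = κ²/c²` this is `SolvesHelmholtzR c κ u`. -/
def SolvesSchrodinger (V u : ℝ → ℝ) : Prop :=
  ContDiff ℝ 1 u ∧ ∀ a b : ℝ, deriv u b = deriv u a + ∫ x in a..b, V x * u x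

namespace SolvesSchrodinger

lemma exp_neg_mul_sub (β x : ℝ) :
    SolvesSchrodinger (fun _ => β ^ 2) (fun y => Real.exp (-(β * (y - x)))) := by
  refine ⟨by fun_prop, fun a b => ?_⟩
  have hsecond (y : ℝ) : HasDerivAt (fun y => -β * Real.exp (-(β * (y - x))))
      (β ^ 2 * Real.exp (-(β * (y - x)))) y :=
    ((hasDerivAt_exp_neg_mul_sub β x y).const_mul (-β)).congr_deriv (by ring)
  rw [intervalIntegral.integral_eq_sub_of_hasDerivAt (fun y _ => hsecond y)
      (Continuous.intervalIntegrable (by fun_prop) a b),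
    (hasDerivAt_exp_neg_mul_sub β x a).deriv, (hasDerivAt_exp_neg_mul_sub β x b).deriv]
  ring

variable {V W u v : ℝ → ℝ} {x y β : ℝ}

lemma differentiable (hu : SolvesSchrodinger V u) : Differentiable ℝ u :=
  hu.1.differentiable one_ne_zero

lemma continuous_deriv (hu : SolvesSchrodinger V u) : Continuous (deriv u) :=
  hu.1.continuous_deriv le_rfl

lemma deriv_eq (hu : SolvesSchrodinger V u) (a : ℝ) :
    deriv u = fun x => deriv u a + ∫ t in a..x, V t * u t :=
  funext (hu.2 a)

lemma locallyIntegrable_mul (hu : SolvesSchrodinger V u) (hV : LocallyIntegrable V) :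
    LocallyIntegrable fun x => V x * u x :=
  hV.mul_continuous hu.1.continuous

lemma absolutelyContinuousOnInterval_deriv (hu : SolvesSchrodinger V u)
    (hV : LocallyIntegrable V) (a b : ℝ) : AbsolutelyContinuousOnInterval (deriv u) a b := by
  have hconst : AbsolutelyContinuousOnInterval (fun _ => deriv u a) a b :=
    (contDiff_const (n := 1)).contDiffOn.absolutelyContinuousOnInterval
  have hint : IntervalIntegrable (fun x => V x * u x) volume a b :=
    intervalIntegrable_of_locallyIntegrable (hu.locallyIntegrable_mul hV) a b
  rw [hu.deriv_eq a]
  exact hconst.add (hint.absolutelyContinuousOnInterval_intervalIntegral Set.left_mem_uIcc)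

lemma ae_hasDerivAt_deriv (hu : SolvesSchrodinger V u) (hV : LocallyIntegrable V) :
    ∀ᵐ x, HasDerivAt (deriv u) (V x * u x) x := by
  filter_upwards [LocallyIntegrable.ae_hasDerivAt_integral (hu.locallyIntegrable_mul hV)] with x hx
  rw [hu.deriv_eq 0]
  exact (hx 0).const_add _

lemma integral_mul_mul_add_deriv_mul_deriv (hu : SolvesSchrodinger V u)
    (hV : LocallyIntegrable V) (hv : ContDiff ℝ 1 v) (a b : ℝ) :
    ∫ x in a..b, (V x * u x * v x + deriv u x * deriv v x)
      = deriv u b * v b - deriv u a * v a := by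
  rw [← (hu.absolutelyContinuousOnInterval_deriv hV a b).integral_deriv_mul_eq_sub
    hv.contDiffOn.absolutelyContinuousOnInterval]
  apply intervalIntegral.integral_congr_ae
  filter_upwards [hu.ae_hasDerivAt_deriv hV] with x hx _
  rw [hx.deriv]

lemma integral_sub_mul_mul_eq_wronskian_sub (hu : SolvesSchrodinger V u)
    (hv : SolvesSchrodinger W v) (hV : LocallyIntegrable V) (hW : LocallyIntegrable W)
    (a b : ℝ) :
    ∫ x in a..b, (V x - W x) * (u x * v x)
      = (deriv u b * v b - u b * deriv v b) - (deriv u a * v a - u a * deriv v a) := by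
  have hint {V' u' v' : ℝ → ℝ} (hu' : SolvesSchrodinger V' u') (hV' : LocallyIntegrable V')
      (hv' : ContDiff ℝ 1 v') : IntervalIntegrable
        (fun x => V' x * u' x * v' x + deriv u' x * deriv v' x) volume a b :=
    (intervalIntegrable_of_locallyIntegrable
      ((hu'.locallyIntegrable_mul hV').mul_continuous hv'.continuous) a b).add
      ((hu'.continuous_deriv.mul (hv'.continuous_deriv le_rfl)).intervalIntegrable a b)
  have huv := hu.integral_mul_mul_add_deriv_mul_deriv hV hv.1 a b
  have hvu := hv.integral_mul_mul_add_deriv_mul_deriv hW hu.1 a b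
  calc ∫ x in a..b, (V x - W x) * (u x * v x)
      = ∫ x in a..b, ((V x * u x * v x + deriv u x * deriv v x)
          - (W x * v x * u x + deriv v x * deriv u x)) := by
        congr 1 with x
        ring
    _ = _ := by
        rw [intervalIntegral.integral_sub (hint hu hV hv.1) (hint hv hW hu.1), huv, hvu]
        ring

lemma monotone_deriv_mul_self (hu : SolvesSchrodinger V u) (hV : LocallyIntegrable V)
    (hV0 : ∀ᵐ x, 0 ≤ V x) : Monotone fun x => deriv u x * u x := by
  intro a b hab
  rw [← sub_nonneg, ← hu.integral_mul_mul_add_deriv_mul_deriv hV hu.1]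
  apply intervalIntegral.integral_nonneg_of_ae_restrict hab
  filter_upwards [ae_restrict_of_ae hV0] with x hx
  simp only [Pi.zero_apply, mul_assoc]
  have := mul_self_nonneg (u x)
  have := mul_self_nonneg (deriv u x)
  positivity

lemma deriv_mul_self_nonpos (hu : SolvesSchrodinger V u) (hV : LocallyIntegrable V)
    (hV0 : ∀ᵐ x, 0 ≤ V x) (hlim : Tendsto u atTop (𝓝 0)) (x : ℝ) : deriv u x * u x ≤ 0 := by
  obtain ⟨ξ, hξ, hderiv⟩ := exists_seq_tendsto_deriv_zero hu.differentiable hlim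
  have hmono := hu.monotone_deriv_mul_self hV hV0
  have hseq : Tendsto ((fun x => deriv u x * u x) ∘ ξ) atTop (𝓝 0) := by
    simpa [Function.comp_def] using hderiv.mul (hlim.comp hξ)
  exact hmono.ge_of_tendsto ((tendsto_iff_tendsto_subseq_of_monotone hmono hξ).2 hseq) x

lemma abs_antitone (hu : SolvesSchrodinger V u) (hV : LocallyIntegrable V)
    (hV0 : ∀ᵐ x, 0 ≤ V x) (hlim : Tendsto u atTop (𝓝 0)) : Antitone fun x => |u x| := by
  have hsq : Antitone fun x => u x ^ 2 :=
    antitone_of_deriv_nonpos (hu.differentiable.pow 2) fun x => by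
      have := hu.deriv_mul_self_nonpos hV hV0 hlim x
      rw [((hu.differentiable x).hasDerivAt.fun_pow 2).deriv]
      simp only [Nat.cast_ofNat, Nat.reduceSub, pow_one]
      linarith
  exact fun x y hxy => sq_le_sq.1 (hsq hxy)

lemma ne_zero (hu : SolvesSchrodinger V u) (hV : LocallyIntegrable V)
    (hV0 : ∀ᵐ x, 0 ≤ V x) (hlim : Tendsto u atTop (𝓝 0)) (hne : ∃ᶠ x in atTop, u x ≠ 0)
    (x : ℝ) : u x ≠ 0 := by
  obtain ⟨y, hxy, hy⟩ := frequently_atTop.1 hne x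
  exact abs_pos.1 ((abs_pos.2 hy).trans_le (hu.abs_antitone hV hV0 hlim hxy))

lemma enorm_deriv_add_mul_self_le_add (hu : SolvesSchrodinger V u) (hV : LocallyIntegrable V)
    (hV0 : ∀ᵐ x, 0 ≤ V x) (hlim : Tendsto u atTop (𝓝 0)) (hβ : 0 ≤ β) (hxy : x ≤ y) :
    ‖deriv u x + β * u x‖ₑ ≤ ‖deriv u y + β * u y‖ₑ + ‖u x‖ₑ *
      ∫⁻ t in Set.Ioi x, ‖V t - β ^ 2‖ₑ * ‖Real.exp (-(β * (t - x)))‖ₑ := by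
  set φ : ℝ → ℝ := fun t => Real.exp (-(β * (t - x))) with hφ_def
  have hφ : SolvesSchrodinger (fun _ => β ^ 2) φ := exp_neg_mul_sub β x
  have hφ_deriv (t : ℝ) : deriv φ t = -β * φ t := (hasDerivAt_exp_neg_mul_sub β x t).deriv
  have hwronskian := hu.integral_sub_mul_mul_eq_wronskian_sub hφ hV (locallyIntegrable_const _) x y
  have hdecomp : deriv u x + β * u x = (deriv u y + β * u y) * φ y
      - ∫ t in x..y, (V t - β ^ 2) * (u t * φ t) := by
    rw [hwronskian, hφ_deriv, hφ_deriv, show φ x = 1 by simp [hφ_def]]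
    ring
  have hboundary : ‖(deriv u y + β * u y) * φ y‖ₑ ≤ ‖deriv u y + β * u y‖ₑ := by
    rw [enorm_mul]
    have hφ_le : φ y ≤ 1 :=
      Real.exp_le_one_iff.2 (neg_nonpos.2 (mul_nonneg hβ (sub_nonneg.2 hxy)))
    refine mul_le_of_le_one_right' ?_
    simpa [Real.enorm_eq_ofReal (Real.exp_nonneg _), hφ_def] using hφ_le
  have hintegral : ‖∫ t in x..y, (V t - β ^ 2) * (u t * φ t)‖ₑ
      ≤ ‖u x‖ₑ * ∫⁻ t in Set.Ioi x, ‖V t - β ^ 2‖ₑ * ‖φ t‖ₑ := by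
    rw [intervalIntegral.integral_of_le hxy, ← lintegral_const_mul' _ _ enorm_ne_top]
    calc ‖∫ t in Set.Ioc x y, (V t - β ^ 2) * (u t * φ t)‖ₑ
        ≤ ∫⁻ t in Set.Ioc x y, ‖(V t - β ^ 2) * (u t * φ t)‖ₑ :=
          enorm_integral_le_lintegral_enorm _
      _ ≤ ∫⁻ t in Set.Ioc x y, ‖u x‖ₑ * (‖V t - β ^ 2‖ₑ * ‖φ t‖ₑ) := by
          refine setLIntegral_mono' measurableSet_Ioc fun t ht => ?_
          have hut : ‖u t‖ₑ ≤ ‖u x‖ₑ :=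
            enorm_le_iff_norm_le.2 (hu.abs_antitone hV hV0 hlim ht.1.le)
          rw [enorm_mul, enorm_mul, mul_left_comm]
          gcongr
      _ ≤ ∫⁻ t in Set.Ioi x, ‖u x‖ₑ * (‖V t - β ^ 2‖ₑ * ‖φ t‖ₑ) :=
          lintegral_mono_set Set.Ioc_subset_Ioi_self
  rw [hdecomp]
  exact enorm_sub_le.trans (add_le_add hboundary hintegral)

lemma enorm_deriv_add_mul_self_le (hu : SolvesSchrodinger V u) (hV : LocallyIntegrable V)
    (hV0 : ∀ᵐ x, 0 ≤ V x) (hlim : Tendsto u atTop (𝓝 0)) (hβ : 0 ≤ β) (x : ℝ) :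
    ‖deriv u x + β * u x‖ₑ ≤ ‖u x‖ₑ *
      ∫⁻ t in Set.Ioi x, ‖V t - β ^ 2‖ₑ * ‖Real.exp (-(β * (t - x)))‖ₑ := by
  obtain ⟨ξ, hξ, hderiv⟩ := exists_seq_tendsto_deriv_zero hu.differentiable hlim
  have hboundary : Tendsto (fun n => ‖deriv u (ξ n) + β * u (ξ n)‖ₑ) atTop (𝓝 0) := by
    simpa using (hderiv.add ((hlim.comp hξ).const_mul β)).enorm
  have hsum := hboundary.add_const (‖u x‖ₑ *
    ∫⁻ t in Set.Ioi x, ‖V t - β ^ 2‖ₑ * ‖Real.exp (-(β * (t - x)))‖ₑ)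
  rw [zero_add] at hsum
  exact ge_of_tendsto hsum <| (hξ.eventually_ge_atTop x).mono fun n hn =>
    hu.enorm_deriv_add_mul_self_le_add hV hV0 hlim hβ hn

lemma enorm_logDeriv_add_le (hu : SolvesSchrodinger V u) (hV : LocallyIntegrable V)
    (hV0 : ∀ᵐ x, 0 ≤ V x) (hlim : Tendsto u atTop (𝓝 0)) (hβ : 0 ≤ β) (hx : u x ≠ 0) :
    ‖logDeriv u x + β‖ₑ ≤
      ∫⁻ t in Set.Ioi x, ‖V t - β ^ 2‖ₑ * ‖Real.exp (-(β * (t - x)))‖ₑ := by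
  have hmul : u x * (logDeriv u x + β) = deriv u x + β * u x := by
    rw [logDeriv_apply]
    field_simp
  have h := hu.enorm_deriv_add_mul_self_le hV hV0 hlim hβ x
  rwa [← hmul, enorm_mul,
    ENNReal.mul_le_mul_iff_right (enorm_ne_zero.2 hx) enorm_ne_top] at h

end SolvesSchrodinger

lemma locallyIntegrable_sq_div_sq {c : ℝ → ℝ} (hq : LocallyIntegrable (qfun c)) (κ : ℝ) :
    LocallyIntegrable fun x => κ ^ 2 / c x ^ 2 := by
  refine (((locallyIntegrable_const (1 : ℝ)).sub hq).smul (κ ^ 2)).congr (.of_forall fun x => ?_)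
  simp [qfun, div_eq_mul_inv]

namespace IsJostPlusR

variable {c u : ℝ → ℝ} {U : ℝ → ℝ → ℝ} {κ x : ℝ}

lemma solvesSchrodinger (hu : IsJostPlusR c κ u) :
    SolvesSchrodinger (fun x => κ ^ 2 / c x ^ 2) u :=
  hu.1

lemma tendsto_zero (hu : IsJostPlusR c κ u) (hκ : 0 < κ) : Tendsto u atTop (𝓝 0) := by
  have hexp : Tendsto (fun x => Real.exp (-(κ * x))) atTop (𝓝 0) :=
    Real.tendsto_exp_neg_atTop_nhds_zero.comp (tendsto_id.const_mul_atTop hκ)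
  have h := hexp.mul hu.2
  simp only [← mul_assoc, ← Real.exp_add, neg_add_cancel, Real.exp_zero, one_mul, zero_mul] at h
  exact h

lemma ne_zero (hu : IsJostPlusR c κ u) (hκ : 0 < κ) (hq : LocallyIntegrable (qfun c)) (x : ℝ) :
    u x ≠ 0 :=
  hu.solvesSchrodinger.ne_zero (locallyIntegrable_sq_div_sq hq κ)
    (.of_forall fun _ => by positivity) (hu.tendsto_zero hκ)
    ((hu.2.eventually_ne one_ne_zero).mono fun _ => right_ne_zero_of_mul).frequently x

lemma wIK_nonneg (hU : IsJostPlusR c κ (U κ)) (hκ : 0 < κ) (hq : LocallyIntegrable (qfun c))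
    (x : ℝ) : 0 ≤ wIK U κ x := by
  have hnonpos := hU.solvesSchrodinger.deriv_mul_self_nonpos (locallyIntegrable_sq_div_sq hq κ)
    (.of_forall fun _ => by positivity) (hU.tendsto_zero hκ) x
  have hne := hU.ne_zero hκ hq x
  have hw : wIK U κ x = -(deriv (U κ) x * U κ x) / (κ * U κ x ^ 2) := by
    rw [wIK]
    field_simp
  rw [hw]
  exact div_nonneg (neg_nonneg.2 hnonpos) (by positivity)

lemma enorm_wIK_sub_le (hU : IsJostPlusR c κ (U κ)) (hκ : 0 < κ)
    (hq : LocallyIntegrable (qfun c)) (hc : 0 ≤ c x) :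
    ‖wIK U κ x - 1 / c x‖ₑ ≤
      ∫⁻ s in Set.Ioi 0, ‖Real.exp (-(s / c x))‖ₑ * ‖qfun c (s / κ + x) - qfun c x‖ₑ := by
  have hlog : wIK U κ x - 1 / c x = -(κ⁻¹ * (logDeriv (U κ) x + κ / c x)) := by
    rw [wIK, logDeriv_apply]
    field_simp
    ring
  have hscale (s : ℝ) : κ⁻¹ * κ⁻¹ * (κ ^ 2 / c (s / κ + x) ^ 2 - (κ / c x) ^ 2)
      = -(qfun c (s / κ + x) - qfun c x) := by
    simp only [qfun]
    field_simp
    ring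
  calc ‖wIK U κ x - 1 / c x‖ₑ
      = ‖κ⁻¹‖ₑ * ‖logDeriv (U κ) x + κ / c x‖ₑ := by rw [hlog, enorm_neg, enorm_mul]
    _ ≤ ‖κ⁻¹‖ₑ * ∫⁻ t in Set.Ioi x,
          ‖κ ^ 2 / c t ^ 2 - (κ / c x) ^ 2‖ₑ * ‖Real.exp (-(κ / c x * (t - x)))‖ₑ := by
        gcongr
        exact hU.solvesSchrodinger.enorm_logDeriv_add_le (locallyIntegrable_sq_div_sq hq κ)
          (.of_forall fun _ => by positivity) (hU.tendsto_zero hκ) (by positivity)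
          (hU.ne_zero hκ hq x)
    _ = ∫⁻ s in Set.Ioi 0, ‖Real.exp (-(s / c x))‖ₑ * ‖qfun c (s / κ + x) - qfun c x‖ₑ := by
        rw [setLIntegral_Ioi_eq_comp_div_add hκ, ← mul_assoc,
          ← lintegral_const_mul' _ _ (ENNReal.mul_ne_top enorm_ne_top enorm_ne_top)]
        congr 1 with s
        rw [← mul_assoc, ← enorm_mul, ← enorm_mul, hscale, enorm_neg, mul_comm,
          add_sub_cancel_right, div_mul_div_comm, mul_comm (c x), mul_div_mul_left _ _ hκ.ne']

end IsJostPlusR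

lemma tendsto_lintegral_enorm_wIK_sub {c : ℝ → ℝ} {cM : ℝ} {U : ℝ → ℝ → ℝ} (hcM : 0 < cM)
    (hc : ∀ᵐ x, 0 < c x ∧ c x ≤ cM) (hq : Integrable (qfun c))
    (hU : ∀ κ, 0 < κ → IsJostPlusR c κ (U κ)) :
    Tendsto (fun κ => ∫⁻ x, ‖wIK U κ x - 1 / c x‖ₑ) atTop (𝓝 0) := by
  have hk_meas : AEMeasurable (fun s => ‖Real.exp (-cM⁻¹ * s)‖ₑ)
      (volume.restrict (Set.Ioi 0)) := by fun_prop
  have hk_top : ∫⁻ s in Set.Ioi 0, ‖Real.exp (-cM⁻¹ * s)‖ₑ ≠ ⊤ :=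
    (exp_neg_integrableOn_Ioi 0 (inv_pos.2 hcM)).2.ne
  refine tendsto_of_tendsto_of_tendsto_of_le_of_le' tendsto_const_nhds
    (tendsto_lintegral_mul_eLpNorm_translate_sub le_rfl ENNReal.one_ne_top
      (memLp_one_iff_integrable.2 hq) hk_meas hk_top) (.of_forall fun _ => zero_le) ?_
  filter_upwards [eventually_gt_atTop 0] with κ hκ
  rw [← lintegral_lintegral_mul_enorm_translate_sub hq.1 hk_meas]
  apply lintegral_mono_ae
  filter_upwards [hc] with x hx
  refine ((hU κ hκ).enorm_wIK_sub_le hκ hq.locallyIntegrable hx.1.le).trans <|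
    setLIntegral_mono' measurableSet_Ioi fun s hs => ?_
  gcongr
  refine enorm_le_iff_norm_le.2 ?_
  rw [Real.norm_of_nonneg (Real.exp_nonneg _), Real.norm_of_nonneg (Real.exp_nonneg _),
    Real.exp_le_exp, neg_mul, neg_le_neg_iff, inv_mul_eq_div]
  exact div_le_div_of_nonneg_left (le_of_lt hs) hx.1 hx.2

lemma integrable_qfun {c : ℝ → ℝ} {c₀ : ℝ} (hc₀ : 0 < c₀) (hc : ∀ᵐ x, c₀ ≤ c x)
    (hint : Integrable fun x => c x - 1) : Integrable (qfun c) := by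
  have hmeas : AEMeasurable c := by simpa using hint.aemeasurable.add_const 1
  have hfactor : ∀ᵐ x, ‖1 / c x + 1 / c x ^ 2‖ ≤ 1 / c₀ + 1 / c₀ ^ 2 := by
    filter_upwards [hc] with x hx
    have : 0 < c x := hc₀.trans_le hx
    rw [Real.norm_of_nonneg (by positivity)]
    gcongr
  refine (hint.mul_bdd (c := 1 / c₀ + 1 / c₀ ^ 2)
    (by fun_prop : AEMeasurable fun x => 1 / c x + 1 / c x ^ 2).aestronglyMeasurable
    hfactor).congr ?_
  filter_upwards [hc] with x hx
  have : 0 < c x := hc₀.trans_le hx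
  rw [qfun]
  field_simp
  ring

lemma HypH2.integrable_sub_one {c : ℝ → ℝ} (hc : HypH2 c) (hmeas : AEStronglyMeasurable c) :
    Integrable fun x => c x - 1 := by
  obtain ⟨C, -, δ, hδ, hbound⟩ := hc
  have hweight : Integrable fun x : ℝ => C * (1 + x ^ 2) ^ (-(1 + δ) / 2) := by
    have h := integrable_rpow_neg_one_add_norm_sq (E := ℝ) (μ := volume) (r := 1 + δ)
      (by simp [hδ])
    simpa [Real.norm_eq_abs, sq_abs] using h.const_mul C
  exact hweight.mono' (hmeas.sub aestronglyMeasurable_const) hbound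

lemma abs_qfun_mul_rIK_sub_sq_le {c : ℝ → ℝ} {U : ℝ → ℝ → ℝ} {c₀ κ x : ℝ} (hc₀ : 0 < c₀)
    (hc : c₀ ≤ c x) (hw : 0 ≤ wIK U κ x) :
    |qfun c x * rIK U κ x - Qfun c x ^ 2| ≤ 2 * (1 + 1 / c₀) * |wIK U κ x - 1 / c x| := by
  have hcx : 0 < c x := hc₀.trans_le hc
  have hfactor : qfun c x * rIK U κ x - Qfun c x ^ 2
      = 2 * (1 - 1 / c x) / (1 + wIK U κ x) * (1 / c x - wIK U κ x) := by
    rw [qfun, rIK, Qfun]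
    field_simp
    ring
  have hQ : |1 - 1 / c x| ≤ 1 + 1 / c₀ := by
    calc |1 - 1 / c x| ≤ 1 + 1 / c x := by
          simpa [abs_of_pos hcx] using abs_sub (1 : ℝ) (1 / c x)
      _ ≤ 1 + 1 / c₀ := by gcongr
  rw [hfactor, abs_mul, abs_sub_comm (1 / c x)]
  gcongr
  rw [abs_div, abs_mul, abs_two, abs_of_nonneg (by positivity : 0 ≤ 1 + wIK U κ x)]
  refine (div_le_self (by positivity) (by linarith)).trans ?_
  gcongr

theorem qr_tendsto_Qsq_general {c : ℝ → ℝ} (h1 : HypH1 c) (hint : Integrable fun x => c x - 1)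
    {U : ℝ → ℝ → ℝ} (hU : ∀ κ, 0 < κ → IsJostPlusR c κ (U κ)) :
    Tendsto (fun κ => ∫ x, |qfun c x * rIK U κ x - Qfun c x ^ 2|) atTop (𝓝 0) := by
  obtain ⟨c₀, hc₀, cM, hcM, hc⟩ := h1
  have hq : Integrable (qfun c) := integrable_qfun hc₀ (hc.mono fun _ hx => hx.1.le) hint
  have hw := tendsto_lintegral_enorm_wIK_sub hcM (hc.mono fun _ hx => ⟨hc₀.trans hx.1, hx.2⟩) hq hU
  have hw_mul := ENNReal.Tendsto.const_mul (a := ‖2 * (1 + 1 / c₀)‖ₑ) hw (.inr enorm_ne_top)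
  rw [mul_zero] at hw_mul
  rw [tendsto_zero_iff_enorm_tendsto_zero]
  refine tendsto_of_tendsto_of_tendsto_of_le_of_le' tendsto_const_nhds hw_mul
    (.of_forall fun _ => zero_le) ?_
  filter_upwards [eventually_gt_atTop 0] with κ hκ
  rw [← lintegral_const_mul' _ _ enorm_ne_top]
  refine (enorm_integral_le_lintegral_enorm _).trans (lintegral_mono_ae ?_)
  filter_upwards [hc] with x hx
  have hw_nonneg := (hU κ hκ).wIK_nonneg hκ hq.locallyIntegrable x
  rw [← enorm_mul, enorm_le_iff_norm_le]
  rw [norm_mul, Real.norm_of_nonneg (by positivity : 0 ≤ 2 * (1 + 1 / c₀)), norm_abs_eq_norm]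
  exact abs_qfun_mul_rIK_sub_sq_le hc₀ hx.1.le hw_nonneg

/-- `q r(·, iκ) → Q²` in `L¹(ℝ)` as `κ → ∞`. -/
theorem qr_tendsto_Qsq (c : ℝ → ℝ) (hmeas : Measurable c)
    (h1 : HypH1 c) (h2 : HypH2 c)
    (U : ℝ → ℝ → ℝ) (hU : ∀ κ : ℝ, 0 < κ → IsJostPlusR c κ (U κ)) :
    Tendsto (fun κ : ℝ => ∫ x : ℝ, |qfun c x * rIK U κ x - (Qfun c x) ^ 2|)
      atTop (𝓝 0) :=
  qr_tendsto_Qsq_general h1 (h2.integrable_sub_one hmeas.aestronglyMeasurable) hU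
end
end

section
/- Let c₁ and c₂ each satisfy [H1] and [H2], and for j = 1, 2 suppose the Jost solutions U_{1,j}, U_{2,j} : ℝ × {Im k ≥ 0} → ℂ at each k depend holomorphically on k in {Im k > 0} and continuously on {Im k ≥ 0} (together with their x-derivatives). For each real k ≠ 0 let R₂(k; c_j) denote the reflection coefficient of c_j, determined by U_{1,j}(·,k) = (R₂(k;c_j)/T_j(k)) U_{2,j}(·,k) + (1/T_j(k)) conj(U_{2,j}(·,k)) with T_j(k) ≠ 0. If R₂(k; c₁) = R₂(k; c₂) for all real k ≠ 0, then ∫_ℝ Q₁(x) dx = ∫_ℝ Q₂(x) dx, where Q_j = 1 − 1/c_j. -/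
open MeasureTheory Filter Topology

noncomputable section

/-- Regularity in `k` of a family of solutions: holomorphy on the open upper half-plane
and continuity up to the real axis, for the solution and its `x`-derivative. -/
def JostFamilyRegular (U : ℂ → ℝ → ℂ) : Prop :=
  ∀ y : ℝ,
    DifferentiableOn ℂ (fun k => U k y) {k : ℂ | 0 < k.im} ∧
    ContinuousOn (fun k => U k y) {k : ℂ | 0 ≤ k.im} ∧
    DifferentiableOn ℂ (fun k => deriv (U k) y) {k : ℂ | 0 < k.im} ∧
    ContinuousOn (fun k => deriv (U k) y) {k : ℂ | 0 ≤ k.im}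

/-!
With `s = -ik` and `n = 1 / c`, the Helmholtz equation becomes the first-order system `u' = -s v`,
`v' = -s n² u` on the closed right half-plane. The local reflection coefficient
`r = (u - v) / (u + v)` of the Jost solution from `+∞` has norm at most `1` because the energy flux
`Re (u conj v)` is monotone, and `1 / T = exp (-(s / 2) φ)` for the phase
`φ = ∫ (1 - n²) (1 + r)`, which is therefore a bounded function of `s`.

At low frequency `r → 0`, hence `φ → ∫ (1 - n²)`, and `R` determines this limit to first order. At
high frequency the Riccati equation `r' = s K (r - ρ)`, whose rate `K` has positive real part,
forces `r` towards `ρ = (1 - n) / (1 + n)` in the mean, hence `φ → 2 ∫ (1 - n) = 2 ∫ Q`.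

If two media have the same `R`, then `|T₁| = |T₂|` on the imaginary axis by conservation of the
flux, so `T₁ / T₂ = exp (s (φ₁ - φ₂) / 2)` has norm `1` there. By Phragmén–Lindelöf, `Re (φ₁ - φ₂)`
on the positive real axis is at most its limit at `+∞`. Its limit at `0` vanishes, so
`0 ≤ ∫ Q₁ - ∫ Q₂`, and exchanging the media gives equality.
-/

namespace Helmholtz

/-! ### Locally Lipschitz functions and almost everywhere derivatives -/

section LocallyLipschitz

variable {X : Type*} [PseudoEMetricSpace X]

lemma locallyLipschitz_mul {A : Type*} [NormedRing A] [NormedAlgebra ℝ A] {f g : X → A}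
    (hf : LocallyLipschitz f) (hg : LocallyLipschitz g) :
    LocallyLipschitz (fun x ↦ f x * g x) :=
  (contDiff_mul (𝕜 := ℝ) (n := 1)).locallyLipschitz.comp (hf.prodMk hg)

lemma locallyLipschitz_inv {K : Type*} [NormedField K] [NormedAlgebra ℝ K] {f : X → K}
    (hf : LocallyLipschitz f) (h0 : ∀ x, f x ≠ 0) : LocallyLipschitz (fun x ↦ (f x)⁻¹) := by
  intro x
  obtain ⟨C, t, ht, hC⟩ := hf x
  obtain ⟨C', t', ht', hC'⟩ := (contDiffAt_inv (n := 1) ℝ (h0 x)).exists_lipschitzOnWith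
  exact ⟨C' * C, t ∩ f ⁻¹' t', inter_mem ht (hf.continuous.continuousAt ht'),
    hC'.comp (hC.mono Set.inter_subset_left) fun y hy ↦ hy.2⟩

lemma locallyLipschitz_cexp {f : X → ℂ} (hf : LocallyLipschitz f) :
    LocallyLipschitz (fun x ↦ Complex.exp (f x)) :=
  (Complex.contDiff_exp (𝕜 := ℝ) (n := 1)).locallyLipschitz.comp hf

lemma locallyLipschitz_ofReal : LocallyLipschitz ((↑) : ℝ → ℂ) :=
  Complex.isometry_ofReal.lipschitz.locallyLipschitz

lemma locallyLipschitz_conj {f : X → ℂ} (hf : LocallyLipschitz f) :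
    LocallyLipschitz (fun x ↦ (starRingEnd ℂ) (f x)) :=
  Complex.isometry_conj.lipschitz.locallyLipschitz.comp hf

lemma locallyLipschitz_re {f : X → ℂ} (hf : LocallyLipschitz f) :
    LocallyLipschitz (fun x ↦ (f x).re) :=
  Complex.reCLM.lipschitz.locallyLipschitz.comp hf

end LocallyLipschitz

section AlmostEverywhereDerivative

variable {E : Type*} [NormedAddCommGroup E] {f g : ℝ → E}

lemma absolutelyContinuousOnInterval_of_locallyLipschitz (hf : LocallyLipschitz f) (a b : ℝ) :
    AbsolutelyContinuousOnInterval f a b :=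
  let ⟨_, hK⟩ := (hf.locallyLipschitzOn (s := Set.uIcc a b)).exists_lipschitzOnWith_of_compact
    isCompact_uIcc
  hK.absolutelyContinuousOnInterval

lemma locallyIntegrable_of_isBigO_one (hm : AEStronglyMeasurable g)
    (hg : ∀ x, g =O[𝓝 x ⊓ ae volume] (fun _ ↦ (1 : ℝ))) : LocallyIntegrable g := fun x ↦
  ((volume.finiteAt_nhds x).inf_of_left.integrableAtFilter
    (hm.stronglyMeasurableAtFilter.filter_mono inf_le_left)
    ((Asymptotics.isBigO_one_iff ℝ).1 (hg x))).of_inf_ae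

variable [NormedSpace ℝ E]

lemma aestronglyMeasurable_of_ae_hasDerivAt [CompleteSpace E] [SecondCountableTopology E]
    (hd : ∀ᵐ x, HasDerivAt f (g x) x) : AEStronglyMeasurable g :=
  (stronglyMeasurable_deriv f).aestronglyMeasurable.congr (hd.mono fun _ hx ↦ hx.deriv)

lemma isBigO_one_of_ae_hasDerivAt (hf : LocallyLipschitz f)
    (hd : ∀ᵐ x, HasDerivAt f (g x) x) (x : ℝ) : g =O[𝓝 x ⊓ ae volume] (fun _ ↦ (1 : ℝ)) := by
  obtain ⟨K, t, ht, hK⟩ := hf x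
  refine Asymptotics.IsBigO.of_bound K ?_
  filter_upwards [mem_inf_of_left (eventually_mem_nhds_iff.2 ht), mem_inf_of_right hd]
    with y hy hdy
  simpa using hdy.deriv ▸ norm_deriv_le_of_lipschitzOn hy hK

lemma intervalIntegrable_of_ae_hasDerivAt [CompleteSpace E] [SecondCountableTopology E]
    (hf : LocallyLipschitz f) (hd : ∀ᵐ x, HasDerivAt f (g x) x) (a b : ℝ) :
    IntervalIntegrable g volume a b :=
  ((locallyIntegrable_of_isBigO_one (aestronglyMeasurable_of_ae_hasDerivAt hd)
    (isBigO_one_of_ae_hasDerivAt hf hd)).integrableOn_isCompact isCompact_uIcc).intervalIntegrable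

lemma integral_eq_sub_of_ae_hasDerivAt [CompleteSpace E] [SecondCountableTopology E]
    (hf : LocallyLipschitz f) (hd : ∀ᵐ x, HasDerivAt f (g x) x) (a b : ℝ) :
    ∫ x in a..b, g x = f b - f a := by
  refine (SeparatingDual.eq_iff_forall_dual_eq (R := ℝ)).2 fun φ ↦ ?_
  rw [← φ.intervalIntegral_comp_comm (intervalIntegrable_of_ae_hasDerivAt hf hd a b), map_sub]
  refine .trans (intervalIntegral.integral_congr_ae ?_)
    (absolutelyContinuousOnInterval_of_locallyLipschitz
      (φ.lipschitz.locallyLipschitz.comp hf) a b).integral_deriv_eq_sub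
  filter_upwards [hd] with x hx _ using (φ.hasFDerivAt.comp_hasDerivAt x hx).deriv.symm

lemma eq_of_ae_hasDerivAt_zero (hf : LocallyLipschitz f) (hd : ∀ᵐ x, HasDerivAt f 0 x)
    (a b : ℝ) : f a = f b := by
  obtain ⟨C, hC⟩ := (absolutelyContinuousOnInterval_of_locallyLipschitz hf a b
    ).const_of_ae_hasDerivAt_zero (hd.mono fun _ hx _ ↦ hx)
  rw [hC a Set.left_mem_uIcc, hC b Set.right_mem_uIcc]

lemma locallyLipschitz_intervalIntegral (hg : LocallyIntegrable g)
    (hO : ∀ x, g =O[𝓝 x ⊓ ae volume] (fun _ ↦ (1 : ℝ))) (a : ℝ) :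
    LocallyLipschitz (fun x ↦ ∫ t in a..x, g t) := by
  have hint (x y : ℝ) : IntervalIntegrable g volume x y :=
    (hg.integrableOn_isCompact isCompact_uIcc).intervalIntegrable
  intro x₀
  obtain ⟨C, hC⟩ := (hO x₀).bound
  obtain ⟨t, ht, N, hN, hbound⟩ := eventually_inf.1 hC
  obtain ⟨δ, hδ, hball⟩ := Metric.mem_nhds_iff.1 ht
  refine ⟨C.toNNReal, Metric.ball x₀ δ, Metric.ball_mem_nhds x₀ hδ, ?_⟩
  refine LipschitzOnWith.of_dist_le_mul fun x hx y hy ↦ ?_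
  rw [dist_eq_norm, intervalIntegral.integral_interval_sub_left (hint _ _) (hint _ _),
    Real.dist_eq]
  refine intervalIntegral.norm_integral_le_of_norm_le_const_ae ?_
  filter_upwards [hN] with z hzN hz
  have hzt : z ∈ t := hball <|
    (convex_ball x₀ δ).ordConnected.uIcc_subset hy hx (Set.uIoc_subset_uIcc hz)
  simpa using (hbound z ⟨hzt, hzN⟩).trans
    (mul_le_mul_of_nonneg_right (Real.le_coe_toNNReal C) (by simp))

variable [CompleteSpace E] [SecondCountableTopology E]

lemma integrableOn_of_ae_hasDerivAt (hd : ∀ᵐ x, HasDerivAt f (g x) x) {t : Set ℝ}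
    (ht : MeasurableSet t) {φ : ℝ → ℝ} (hφ : IntegrableOn φ t) (hg : ∀ x ∈ t, ‖g x‖ ≤ φ x) :
    IntegrableOn g t :=
  hφ.mono' (aestronglyMeasurable_of_ae_hasDerivAt hd).restrict
    ((ae_restrict_iff' ht).2 (Eventually.of_forall hg))

lemma exists_tendsto_atTop_of_integrableOn_Ioi (hf : LocallyLipschitz f)
    (hd : ∀ᵐ x, HasDerivAt f (g x) x) {x₀ : ℝ} (hg : IntegrableOn g (Set.Ioi x₀)) :
    ∃ l, Tendsto f atTop (𝓝 l) := by
  refine ⟨f x₀ + ∫ x in Set.Ioi x₀, g x,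
    ((intervalIntegral_tendsto_integral_Ioi x₀ hg tendsto_id).const_add (f x₀)).congr fun x ↦ ?_⟩
  rw [integral_eq_sub_of_ae_hasDerivAt hf hd x₀ _, id, add_sub_cancel]

lemma integral_Ioi_eq_sub_of_tendsto (hf : LocallyLipschitz f)
    (hd : ∀ᵐ x, HasDerivAt f (g x) x) {x : ℝ} (hg : IntegrableOn g (Set.Ioi x)) {l : E}
    (hl : Tendsto f atTop (𝓝 l)) : ∫ t in Set.Ioi x, g t = l - f x := by
  refine tendsto_nhds_unique (intervalIntegral_tendsto_integral_Ioi x hg tendsto_id) ?_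
  simpa only [integral_eq_sub_of_ae_hasDerivAt hf hd, id] using hl.sub_const (f x)

lemma integral_Iic_eq_sub_of_tendsto (hf : LocallyLipschitz f)
    (hd : ∀ᵐ x, HasDerivAt f (g x) x) {x : ℝ} (hg : IntegrableOn g (Set.Iic x)) {l : E}
    (hl : Tendsto f atBot (𝓝 l)) : ∫ t in Set.Iic x, g t = f x - l := by
  refine tendsto_nhds_unique (intervalIntegral_tendsto_integral_Iic x hg tendsto_id) ?_
  simpa only [integral_eq_sub_of_ae_hasDerivAt hf hd, id] using hl.const_sub (f x)

end AlmostEverywhereDerivative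

lemma eq_mul_exp_neg_integral_Ioi {f a : ℝ → ℂ} {L : ℂ} (hf : LocallyLipschitz f)
    (ha : Integrable a) (hO : ∀ x, a =O[𝓝 x ⊓ ae volume] (fun _ ↦ (1 : ℝ)))
    (hd : ∀ᵐ x, HasDerivAt f (a x * f x) x) (hL : Tendsto f atTop (𝓝 L)) (x : ℝ) :
    f x = L * Complex.exp (-∫ t in Set.Ioi x, a t) := by
  set p : ℝ → ℂ := fun y ↦ ∫ t in x..y, a t with hp
  have hconst (y : ℝ) : f y * Complex.exp (-p y) = f x * Complex.exp (-p x) := by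
    refine eq_of_ae_hasDerivAt_zero (f := fun y ↦ f y * Complex.exp (-p y))
      (locallyLipschitz_mul hf (locallyLipschitz_cexp
        (locallyLipschitz_intervalIntegral ha.locallyIntegrable hO x).neg)) ?_ y x
    filter_upwards [hd, LocallyIntegrable.ae_hasDerivAt_integral ha.locallyIntegrable]
      with y hfy hpy
    exact (hfy.mul (hpy x).neg.cexp).congr_deriv (by ring)
  have hlim : Tendsto (fun y ↦ f y * Complex.exp (-p y)) atTop
      (𝓝 (L * Complex.exp (-∫ t in Set.Ioi x, a t))) :=
    hL.mul (intervalIntegral_tendsto_integral_Ioi x ha.integrableOn tendsto_id).neg.cexp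
  simp only [hconst] at hlim
  simpa [hp] using tendsto_nhds_unique tendsto_const_nhds hlim

section Oscillation

variable {w : ℂ} {l : Filter ℝ} [l.NeBot]

lemma norm_cexp_mul_ofReal (w : ℂ) (x : ℝ) :
    ‖Complex.exp (w * x)‖ = Real.exp (w.re * x) := by
  simp [Complex.norm_exp]

lemma not_tendsto_cexp_mul (hl : ∀ c, Tendsto (· + c) l l) (hw : w.re = 0) (hw0 : w ≠ 0)
    (γ : ℂ) : ¬ Tendsto (fun x : ℝ ↦ Complex.exp (w * x)) l (𝓝 γ) := by
  intro h
  have him : w.im ≠ 0 := fun him ↦ hw0 (Complex.ext hw him)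
  have hwI : w = w.im * Complex.I := Complex.ext (by simp [hw]) (by simp)
  have hshift (x : ℝ) :
      Complex.exp (w * ((x + Real.pi / w.im : ℝ) : ℂ)) = -Complex.exp (w * x) := by
    have : w * ((x + Real.pi / w.im : ℝ) : ℂ) = w * x + Real.pi * Complex.I := by
      have him' : (w.im : ℂ) ≠ 0 := Complex.ofReal_ne_zero.2 him
      push_cast
      field_simp
      linear_combination Real.pi * hwI
    rw [this, Complex.exp_add, Complex.exp_pi_mul_I, mul_neg_one]
  have hneg : -γ = γ :=
    tendsto_nhds_unique (h.neg.congr fun x ↦ (hshift x).symm) (h.comp (hl (Real.pi / w.im)))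
  have hnorm : ‖γ‖ = 1 :=
    tendsto_nhds_unique h.norm (by simp [norm_cexp_mul_ofReal, hw])
  simp [neg_eq_self.1 hneg] at hnorm

lemma limits_of_tendsto_add_cexp_mul (hl : ∀ c, Tendsto (· + c) l l) (hw : w.re = 0)
    (hw0 : w ≠ 0) {f g : ℝ → ℂ} {a b c : ℂ} (hf : Tendsto f l (𝓝 a)) (hg : Tendsto g l (𝓝 b))
    (hfg : Tendsto (fun x : ℝ ↦ f x + Complex.exp (w * x) * g x) l (𝓝 c)) : a = c ∧ b = 0 := by
  have hdiff : Tendsto (fun x : ℝ ↦ Complex.exp (w * x) * g x) l (𝓝 (c - a)) := by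
    simpa using hfg.sub hf
  have hb : b = 0 := by
    by_contra hb
    refine not_tendsto_cexp_mul hl hw hw0 _ ((hdiff.div hg hb).congr' ?_)
    filter_upwards [hg.eventually_ne hb] with x hx
    exact mul_div_cancel_right₀ _ hx
  have hzero : Tendsto (fun x : ℝ ↦ Complex.exp (w * x) * g x) l (𝓝 0) := by
    rw [tendsto_zero_iff_norm_tendsto_zero]
    simpa [norm_cexp_mul_ofReal, hw, hb] using hg.norm
  exact ⟨(sub_eq_zero.1 (tendsto_nhds_unique hdiff hzero)).symm, hb⟩

end Oscillation

section Dissipative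

open scoped RealInnerProductSpace

variable {E : Type*} [NormedAddCommGroup E] [InnerProductSpace ℝ E]

lemma le_deriv_norm_of_le_inner {d : ℝ → E} {d' : E} {N' μ φ x : ℝ} (hd : HasDerivAt d d' x)
    (hN : HasDerivAt (fun y ↦ ‖d y‖) N' x) (hφ : 0 ≤ φ)
    (h : μ * ‖d x‖ ^ 2 - φ * ‖d x‖ ≤ ⟪d x, d'⟫) : μ * ‖d x‖ - φ ≤ N' := by
  rcases eq_or_ne (d x) 0 with h0 | h0
  · have hmin : IsLocalMin (fun y ↦ ‖d y‖) x :=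
      Eventually.of_forall fun y ↦ by simp [h0]
    simpa [h0, hmin.hasDerivAt_eq_zero hN] using hφ
  · have hsq : 2 * ‖d x‖ * N' = 2 * ⟪d x, d'⟫ := by
      simpa using (hN.pow 2).unique hd.norm_sq
    have hpos : 0 < ‖d x‖ := norm_pos_iff.2 h0
    refine le_of_mul_le_mul_left ?_ hpos
    linarith

lemma mul_integral_norm_le_of_le_inner {d d' : ℝ → E} {φ : ℝ → ℝ} {μ a b : ℝ} (hab : a ≤ b)
    (hd : LocallyLipschitz d) (hd' : ∀ᵐ x, HasDerivAt d (d' x) x)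
    (hφ : ∀ x, 0 ≤ φ x) (hφi : IntervalIntegrable φ volume a b)
    (h : ∀ᵐ x, μ * ‖d x‖ ^ 2 - φ x * ‖d x‖ ≤ ⟪d x, d' x⟫) :
    μ * ∫ x in a..b, ‖d x‖ ≤ ‖d b‖ - ‖d a‖ + ∫ x in a..b, φ x := by
  have hac := absolutelyContinuousOnInterval_of_locallyLipschitz
    (lipschitzWith_one_norm.locallyLipschitz.comp hd) a b
  have hi : IntervalIntegrable (fun x ↦ μ * ‖d x‖) volume a b :=
    (hd.continuous.norm.const_mul μ).intervalIntegrable a b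
  have hle : ∫ x in a..b, (μ * ‖d x‖ - φ x) ≤ ∫ x in a..b, deriv (fun y ↦ ‖d y‖) x := by
    refine intervalIntegral.integral_mono_ae_restrict hab (hi.sub hφi)
      hac.intervalIntegrable_deriv ?_
    rw [EventuallyLE, ae_restrict_iff' measurableSet_Icc]
    filter_upwards [hd', h, hac.ae_differentiableAt] with x hdx hx hNx hxab
    exact le_deriv_norm_of_le_inner hdx (hNx (by rwa [Set.uIcc_of_le hab])).hasDerivAt (hφ x) hx
  have hftc := hac.integral_deriv_eq_sub
  rw [intervalIntegral.integral_sub hi hφi, intervalIntegral.integral_const_mul] at hle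
  simp only [Function.comp_def] at hftc
  linarith

end Dissipative

lemma exists_contDiff_integral_norm_sub_le {f : ℝ → ℂ} (hf : Integrable f) {ε : ℝ}
    (hε : 0 < ε) : ∃ g : ℝ → ℂ, HasCompactSupport g ∧ ContDiff ℝ 1 g ∧ ∫ x, ‖f x - g x‖ ≤ ε := by
  obtain ⟨g, hgs, hg, hfg⟩ := MemLp.exist_eLpNorm_sub_le ENNReal.one_ne_top le_rfl
    (memLp_one_iff_integrable.2 hf) hε
  refine ⟨g, hgs, hg.of_le (by exact_mod_cast le_top), ?_⟩
  have hint := integral_norm_eq_lintegral_enorm (hf.1.sub hg.continuous.aestronglyMeasurable)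
  rw [← eLpNorm_one_eq_lintegral_enorm] at hint
  exact hint.trans_le <| ENNReal.toReal_le_of_le_ofReal hε.le hfg

lemma re_le_re_of_norm_cexp_le_one {H : ℂ → ℂ} {a : ℂ} {A : ℝ}
    (hd : DiffContOnCl ℂ (fun s ↦ Complex.exp (s * H s)) {s | 0 < s.re})
    (hA : ∀ s : ℂ, 0 < s.re → ‖H s‖ ≤ A)
    (him : ∀ t : ℝ, ‖Complex.exp (t * Complex.I * H (t * Complex.I))‖ ≤ 1)
    (hlim : Tendsto (fun x : ℝ ↦ H x) atTop (𝓝 a)) {x : ℝ} (hx : 0 < x) :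
    (H x).re ≤ a.re := by
  refine le_of_forall_gt_imp_ge_of_dense fun η hη ↦ ?_
  have hnorm (y : ℝ) : ‖Complex.exp (y * H y) * Complex.exp (-(η * y))‖ =
      Real.exp (y * ((H y).re - η)) := by
    rw [← Complex.exp_add, Complex.norm_exp]
    congr 1
    rw [Complex.add_re, Complex.neg_re, Complex.re_ofReal_mul, Complex.re_ofReal_mul,
      Complex.ofReal_re]
    ring
  have hbound : ‖Complex.exp (x * H x) * Complex.exp (-(η * x))‖ ≤ 1 := by
    refine PhragmenLindelof.right_half_plane_of_bounded_on_real (z := (x : ℂ))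
      (f := fun s ↦ Complex.exp (s * H s) * Complex.exp (-(η * s)))
      ?_ ⟨1, one_lt_two, A + |η|, ?_⟩ ?_ (fun t ↦ ?_) (by simpa using hx.le)
    · have : Differentiable ℂ fun s : ℂ ↦ Complex.exp (-(η * s)) := by fun_prop
      simpa [smul_eq_mul] using hd.smul this.diffContOnCl
    · refine Asymptotics.IsBigO.of_bound 1 ?_
      filter_upwards [mem_inf_of_right (mem_principal_self _)] with s hs
      rw [← Complex.exp_add, Complex.norm_exp, one_mul, Real.norm_of_nonneg (Real.exp_pos _).le,
        Real.rpow_one, Real.exp_le_exp]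
      calc (s * H s + -(η * s)).re ≤ ‖s * H s + -(η * s)‖ := Complex.re_le_norm _
        _ ≤ ‖s‖ * ‖H s‖ + |η| * ‖s‖ := (norm_add_le _ _).trans_eq (by simp)
        _ ≤ (A + |η|) * ‖s‖ := by nlinarith [hA s hs, norm_nonneg s]
    · refine ⟨1, eventually_map.2 ?_⟩
      filter_upwards [(Complex.continuous_re.tendsto a).comp hlim |>.eventually_lt_const hη,
        eventually_gt_atTop 0] with y hy hy0
      rw [hnorm, Real.exp_le_one_iff]
      exact mul_nonpos_of_nonneg_of_nonpos hy0.le (sub_nonpos.2 hy.le)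
    · have : ‖Complex.exp (-(η * (t * Complex.I)))‖ = 1 := by simp [Complex.norm_exp]
      simpa [this] using him t
  rw [hnorm, Real.exp_le_one_iff] at hbound
  nlinarith

open Complex (exp I)
open scoped ComplexConjugate

/-! ### Jost pairs -/

/-- The conditions on a real function `q = 1 - n²`, with `n` the refractive index, under which the
first-order system of `IsSolution` has Jost solutions. -/
structure IsPotential (q : ℝ → ℝ) : Prop where
  integrable : Integrable q
  bounded : ∃ M : ℝ, ∀ᵐ x, |q x| ≤ M
  le_one : ∀ᵐ x, q x ≤ 1

/-- The equation `u'' = s² (1 - q) u`, that is the Helmholtz equation at the wave number `k = i s`,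
as the first-order system `u' = -s v`, `v' = -s (1 - q) u`. -/
structure IsSolution (q : ℝ → ℝ) (s : ℂ) (u v : ℝ → ℂ) : Prop where
  locallyLipschitz_fst : LocallyLipschitz u
  locallyLipschitz_snd : LocallyLipschitz v
  hasDerivAt_fst : ∀ᵐ x, HasDerivAt u (-s * v x) x
  hasDerivAt_snd : ∀ᵐ x, HasDerivAt v (-s * (1 - q x) * u x) x

/-- The pair `(u, -u'/s)`, for `u` the Jost solution from `+∞` at the wave number `k = i s ≠ 0` in
the closed upper half-plane, that is `Re s ≥ 0`. -/
structure IsJostPair (q : ℝ → ℝ) (s : ℂ) (u v : ℝ → ℂ) : Prop extends IsSolution q s u v where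
  potential : IsPotential q
  re_nonneg : 0 ≤ s.re
  ne_zero : s ≠ 0
  tendsto_atTop : Tendsto (fun x : ℝ ↦ exp (s * x) * u x) atTop (𝓝 1)

/-- The amplitude `e^{sx} (u + v)` of the wave going to `+∞`; it is constant where `q = 0`. -/
def rightAmp (s : ℂ) (u v : ℝ → ℂ) (x : ℝ) : ℂ := exp (s * x) * (u x + v x)

/-- The amplitude `e^{-sx} (u - v)` of the wave going to `-∞`; it is constant where `q = 0`. -/
def leftAmp (s : ℂ) (u v : ℝ → ℂ) (x : ℝ) : ℂ := exp (-s * x) * (u x - v x)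

/-- The local reflection coefficient `(u - v) / (u + v)`, which solves a Riccati equation. -/
def reflectionRatio (u v : ℝ → ℂ) (x : ℝ) : ℂ := (u x - v x) / (u x + v x)

variable {q : ℝ → ℝ} {s : ℂ} {u v : ℝ → ℂ}

lemma exp_two_mul_mul_leftAmp (s : ℂ) (u v : ℝ → ℂ) (x : ℝ) :
    exp (2 * s * x) * leftAmp s u v x = exp (s * x) * (u x - v x) := by
  rw [leftAmp, ← mul_assoc, ← Complex.exp_add]
  congr 2
  ring

lemma rightAmp_add_exp_mul_leftAmp (s : ℂ) (u v : ℝ → ℂ) (x : ℝ) :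
    rightAmp s u v x + exp (2 * s * x) * leftAmp s u v x = 2 * (exp (s * x) * u x) := by
  rw [exp_two_mul_mul_leftAmp, rightAmp]
  ring

lemma locallyLipschitz_cexp_mul (w : ℂ) : LocallyLipschitz (fun x : ℝ ↦ exp (w * x)) :=
  locallyLipschitz_cexp (locallyLipschitz_mul (.const w) locallyLipschitz_ofReal)

lemma hasDerivAt_cexp_mul (w : ℂ) (x : ℝ) :
    HasDerivAt (fun x : ℝ ↦ exp (w * x)) (w * exp (w * x)) x := by
  simpa [mul_comm] using (Complex.ofRealCLM.hasDerivAt.const_mul w).cexp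

namespace IsSolution

lemma locallyLipschitz_rightAmp (h : IsSolution q s u v) : LocallyLipschitz (rightAmp s u v) :=
  locallyLipschitz_mul (locallyLipschitz_cexp_mul s)
    (h.locallyLipschitz_fst.add h.locallyLipschitz_snd)

lemma locallyLipschitz_leftAmp (h : IsSolution q s u v) : LocallyLipschitz (leftAmp s u v) :=
  locallyLipschitz_mul (locallyLipschitz_cexp_mul (-s))
    (h.locallyLipschitz_fst.sub h.locallyLipschitz_snd)

lemma hasDerivAt_rightAmp (h : IsSolution q s u v) :
    ∀ᵐ x : ℝ, HasDerivAt (rightAmp s u v) (s * q x * (exp (s * x) * u x)) x := by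
  filter_upwards [h.hasDerivAt_fst, h.hasDerivAt_snd] with x hu hv
  refine ((hasDerivAt_cexp_mul s x).mul (hu.add hv)).congr_deriv ?_
  simp only [Pi.add_apply]
  ring

lemma hasDerivAt_leftAmp (h : IsSolution q s u v) :
    ∀ᵐ x : ℝ, HasDerivAt (leftAmp s u v) (-s * q x * (exp (-s * x) * u x)) x := by
  filter_upwards [h.hasDerivAt_fst, h.hasDerivAt_snd] with x hu hv
  refine ((hasDerivAt_cexp_mul (-s) x).mul (hu.sub hv)).congr_deriv ?_
  simp only [Pi.sub_apply]
  ring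

lemma locallyLipschitz_flux (h : IsSolution q s u v) :
    LocallyLipschitz (fun x ↦ (u x * conj (v x)).re) :=
  locallyLipschitz_re
    (locallyLipschitz_mul h.locallyLipschitz_fst (locallyLipschitz_conj h.locallyLipschitz_snd))

lemma hasDerivAt_flux (h : IsSolution q s u v) :
    ∀ᵐ x, HasDerivAt (fun x ↦ (u x * conj (v x)).re)
      (-(s.re * (Complex.normSq (v x) + (1 - q x) * Complex.normSq (u x)))) x := by
  filter_upwards [h.hasDerivAt_fst, h.hasDerivAt_snd] with x hu hv
  refine (Complex.reCLM.hasFDerivAt.comp_hasDerivAt x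
    (hu.mul (Complex.conjCLE.hasFDerivAt.comp_hasDerivAt x hv))).congr_deriv ?_
  simp only [Function.comp_apply, ContinuousAlgEquiv.coe_coeCLE, Complex.conjCAE_apply,
    ContinuousLinearEquiv.coe_coe, ContinuousAlgEquiv.coeCLE_apply, Complex.reCLM_apply, map_neg,
    map_mul, map_sub, map_one, Complex.conj_ofReal, Complex.normSq_apply, Complex.add_re,
    Complex.neg_re, Complex.mul_re, Complex.mul_im, Complex.sub_re, Complex.sub_im,
    Complex.conj_re, Complex.conj_im, Complex.neg_im, Complex.one_re, Complex.one_im,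
    Complex.ofReal_re, Complex.ofReal_im]
  ring

lemma antitone_flux (h : IsSolution q s u v) (hq : ∀ᵐ x, q x ≤ 1) (hs : 0 ≤ s.re) :
    Antitone (fun x ↦ (u x * conj (v x)).re) := by
  intro x y hxy
  rw [← sub_nonpos, ← integral_eq_sub_of_ae_hasDerivAt h.locallyLipschitz_flux h.hasDerivAt_flux,
    intervalIntegral.integral_neg, neg_nonpos]
  refine intervalIntegral.integral_nonneg_of_ae hxy (hq.mono fun t ht ↦ ?_)
  have := sub_nonneg.2 ht
  have := Complex.normSq_nonneg (u t)
  have := Complex.normSq_nonneg (v t)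
  simp only [Pi.zero_apply]
  positivity

lemma flux_eq (h : IsSolution q s u v) (hs : s.re = 0) (x y : ℝ) :
    (u x * conj (v x)).re = (u y * conj (v y)).re :=
  eq_of_ae_hasDerivAt_zero h.locallyLipschitz_flux
    (h.hasDerivAt_flux.mono fun x hx ↦ by simpa [hs] using hx) x y

end IsSolution

lemma norm_add_sq_sub_norm_sub_sq (a b : ℂ) :
    ‖a + b‖ ^ 2 - ‖a - b‖ ^ 2 = 4 * (a * conj b).re := by
  rw [Complex.sq_norm, Complex.sq_norm, Complex.normSq_add, Complex.normSq_sub]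
  ring

lemma tendsto_cexp_mul_atTop_zero {w : ℂ} (hw : w.re < 0) :
    Tendsto (fun x : ℝ ↦ exp (w * x)) atTop (𝓝 0) := by
  rw [tendsto_zero_iff_norm_tendsto_zero]
  simp_rw [norm_cexp_mul_ofReal]
  exact Real.tendsto_exp_atBot.comp (tendsto_id.const_mul_atTop_of_neg hw)

namespace IsJostPair

lemma norm_deriv_leftAmp_le (h : IsJostPair q s u v) {x t C : ℝ} (hxt : x ≤ t)
    (hC : ‖exp (s * t) * u t‖ ≤ C) :
    ‖-s * q t * (exp (-s * t) * u t)‖ ≤ ‖s‖ * C * Real.exp (-(2 * s).re * x) * |q t| := by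
  have hsplit : exp (-s * t) * u t = exp (-(2 * s) * t) * (exp (s * t) * u t) := by
    rw [← mul_assoc, ← Complex.exp_add]
    congr 2
    ring
  have hdecay : Real.exp ((-(2 * s)).re * t) ≤ Real.exp (-(2 * s).re * x) := by
    rw [Complex.neg_re, Real.exp_le_exp]
    exact mul_le_mul_of_nonpos_left hxt (by simpa using h.re_nonneg)
  rw [hsplit, norm_mul, norm_mul, norm_mul, norm_neg, Complex.norm_real, Real.norm_eq_abs,
    norm_cexp_mul_ofReal]
  calc ‖s‖ * |q t| * (Real.exp ((-(2 * s)).re * t) * ‖exp (s * t) * u t‖)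
      ≤ ‖s‖ * |q t| * (Real.exp (-(2 * s).re * x) * C) := by gcongr
    _ = _ := by ring

lemma integrableOn_deriv_leftAmp (h : IsJostPair q s u v) {x C : ℝ}
    (hC : ∀ t, x ≤ t → ‖exp (s * t) * u t‖ ≤ C) :
    IntegrableOn (fun t : ℝ ↦ -s * q t * (exp (-s * t) * u t)) (Set.Ioi x) :=
  integrableOn_of_ae_hasDerivAt h.hasDerivAt_leftAmp measurableSet_Ioi
    (h.potential.integrable.abs.const_mul _).integrableOn
    fun t ht ↦ h.norm_deriv_leftAmp_le (le_of_lt ht) (hC t (le_of_lt ht))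

lemma exists_norm_le_two (h : IsJostPair q s u v) :
    ∃ x₀ : ℝ, ∀ x, x₀ ≤ x → ‖exp (s * x) * u x‖ ≤ 2 :=
  eventually_atTop.1 (h.tendsto_atTop.norm.eventually_le_const (by simp))

lemma exists_tendsto_rightAmp_atTop (h : IsJostPair q s u v) :
    ∃ A, Tendsto (rightAmp s u v) atTop (𝓝 A) := by
  obtain ⟨x₀, hx₀⟩ := h.exists_norm_le_two
  refine exists_tendsto_atTop_of_integrableOn_Ioi h.locallyLipschitz_rightAmp
    h.hasDerivAt_rightAmp (x₀ := x₀) (integrableOn_of_ae_hasDerivAt h.hasDerivAt_rightAmp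
      measurableSet_Ioi (φ := fun x ↦ ‖s‖ * |q x| * 2)
      ((h.potential.integrable.abs.const_mul _).mul_const _).integrableOn fun x hx ↦ ?_)
  rw [norm_mul, norm_mul, Complex.norm_real, Real.norm_eq_abs]
  gcongr
  exact hx₀ x (le_of_lt hx)

lemma tendsto_leftAmp_atTop (h : IsJostPair q s u v) :
    Tendsto (leftAmp s u v) atTop (𝓝 0) := by
  obtain ⟨A, hA⟩ := h.exists_tendsto_rightAmp_atTop
  have hsum : Tendsto (fun x : ℝ ↦ rightAmp s u v x + exp (2 * s * x) * leftAmp s u v x) atTop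
      (𝓝 (2 * 1)) := by
    simpa only [rightAmp_add_exp_mul_leftAmp] using h.tendsto_atTop.const_mul 2
  rcases h.re_nonneg.lt_or_eq with hpos | hzero
  · have hdecay : Tendsto (fun x : ℝ ↦ exp (-(2 * s) * x)) atTop (𝓝 0) :=
      tendsto_cexp_mul_atTop_zero (by simpa using hpos)
    have := hdecay.mul (hsum.sub hA)
    rw [zero_mul] at this
    refine this.congr fun x ↦ ?_
    rw [add_sub_cancel_left, ← mul_assoc, ← Complex.exp_add]
    simp
  · obtain ⟨x₀, hx₀⟩ := h.exists_norm_le_two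
    obtain ⟨B, hB⟩ := exists_tendsto_atTop_of_integrableOn_Ioi h.locallyLipschitz_leftAmp
      h.hasDerivAt_leftAmp (h.integrableOn_deriv_leftAmp hx₀)
    have hB0 : B = 0 := (limits_of_tendsto_add_cexp_mul
      (fun c ↦ tendsto_atTop_add_const_right _ c tendsto_id) (by simp [← hzero])
      (mul_ne_zero two_ne_zero h.ne_zero) hA hB hsum).2
    rwa [hB0] at hB

lemma norm_exp_mul_sub_le (h : IsJostPair q s u v) {x C : ℝ}
    (hC : ∀ t, x ≤ t → ‖exp (s * t) * u t‖ ≤ C) :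
    ‖exp (s * x) * (u x - v x)‖ ≤ ‖s‖ * C * ∫ t in Set.Ioi x, |q t| := by
  have hleft : ‖leftAmp s u v x‖ ≤
      ‖s‖ * C * Real.exp (-(2 * s).re * x) * ∫ t in Set.Ioi x, |q t| := by
    rw [← norm_neg, ← zero_sub, ← integral_Ioi_eq_sub_of_tendsto h.locallyLipschitz_leftAmp
      h.hasDerivAt_leftAmp (h.integrableOn_deriv_leftAmp hC) h.tendsto_leftAmp_atTop,
      ← integral_const_mul]
    refine norm_integral_le_of_norm_le (h.potential.integrable.abs.const_mul _).integrableOn ?_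
    filter_upwards [ae_restrict_mem measurableSet_Ioi] with t ht
    exact h.norm_deriv_leftAmp_le (le_of_lt ht) (hC t (le_of_lt ht))
  rw [← exp_two_mul_mul_leftAmp, norm_mul, norm_cexp_mul_ofReal]
  calc Real.exp ((2 * s).re * x) * ‖leftAmp s u v x‖
      ≤ Real.exp ((2 * s).re * x) *
          (‖s‖ * C * Real.exp (-(2 * s).re * x) * ∫ t in Set.Ioi x, |q t|) := by gcongr
    _ = Real.exp ((2 * s).re * x + -(2 * s).re * x) *
          (‖s‖ * C * ∫ t in Set.Ioi x, |q t|) := by rw [Real.exp_add]; ring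
    _ = ‖s‖ * C * ∫ t in Set.Ioi x, |q t| := by simp

lemma tendsto_exp_mul_sub_atTop (h : IsJostPair q s u v) :
    Tendsto (fun x : ℝ ↦ exp (s * x) * (u x - v x)) atTop (𝓝 0) := by
  obtain ⟨x₀, hx₀⟩ := h.exists_norm_le_two
  have htail : Tendsto (fun x : ℝ ↦ ‖s‖ * 2 * ∫ t in Set.Ioi x, |q t|) atTop (𝓝 0) := by
    simpa using (tendsto_integral_Ioi_zero (μ := volume) (f := fun t ↦ |q t|)
      (tendsto_id (α := ℝ) (x := atTop))).const_mul (‖s‖ * 2)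
  refine squeeze_zero_norm' ?_ htail
  filter_upwards [eventually_ge_atTop x₀] with x hx
  exact h.norm_exp_mul_sub_le fun t ht ↦ hx₀ t (hx.trans ht)

lemma tendsto_rightAmp_atTop (h : IsJostPair q s u v) :
    Tendsto (rightAmp s u v) atTop (𝓝 2) := by
  have := (h.tendsto_atTop.const_mul 2).sub h.tendsto_exp_mul_sub_atTop
  rw [mul_one, sub_zero] at this
  refine this.congr fun x ↦ ?_
  rw [rightAmp]
  ring

lemma norm_sub_lt_norm_add (h : IsJostPair q s u v) (x : ℝ) : ‖u x - v x‖ < ‖u x + v x‖ := by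
  obtain ⟨y, hxy, hy⟩ : ∃ y, x ≤ y ∧ ‖u y - v y‖ < ‖u y + v y‖ := by
    have hlt := h.tendsto_exp_mul_sub_atTop.norm.eventually_lt h.tendsto_rightAmp_atTop.norm
      (by simp)
    obtain ⟨y, hy, hxy⟩ := (hlt.and (eventually_ge_atTop x)).exists
    rw [rightAmp, norm_mul, norm_mul] at hy
    exact ⟨y, hxy, lt_of_mul_lt_mul_left hy (norm_nonneg _)⟩
  have hflux := h.antitone_flux h.potential.le_one h.re_nonneg hxy
  have hsq : ‖u y - v y‖ ^ 2 < ‖u y + v y‖ ^ 2 := by gcongr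
  refine lt_of_pow_lt_pow_left₀ 2 (norm_nonneg _) ?_
  linarith [norm_add_sq_sub_norm_sub_sq (u x) (v x), norm_add_sq_sub_norm_sub_sq (u y) (v y)]

end IsJostPair

/-! ### Phase and transmission coefficient -/

/-- The phase `∫ q (1 + r)` gained by a Jost pair, `r` being its local reflection coefficient. -/
def phase (q : ℝ → ℝ) (u v : ℝ → ℂ) : ℂ := ∫ x, q x * (1 + reflectionRatio u v x)

/-- The inverse `1 / T` of the transmission coefficient of a Jost pair. -/
def invTransmission (q : ℝ → ℝ) (s : ℂ) (u v : ℝ → ℂ) : ℂ := exp (-(s / 2 * phase q u v))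

/-- The integral `∫ q e^{-sx} u`: on the imaginary axis `s` times it is `2 R / T`, where `R` is the
reflection coefficient. -/
def bornIntegral (q : ℝ → ℝ) (s : ℂ) (u : ℝ → ℂ) : ℂ := ∫ x : ℝ, q x * (exp (-s * x) * u x)

namespace IsJostPair

lemma add_ne_zero (h : IsJostPair q s u v) (x : ℝ) : u x + v x ≠ 0 :=
  norm_pos_iff.1 ((norm_nonneg _).trans_lt (h.norm_sub_lt_norm_add x))

lemma norm_reflectionRatio_le_one (h : IsJostPair q s u v) (x : ℝ) :
    ‖reflectionRatio u v x‖ ≤ 1 := by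
  rw [reflectionRatio, norm_div]
  exact div_le_one_of_le₀ (h.norm_sub_lt_norm_add x).le (norm_nonneg _)

lemma norm_one_add_reflectionRatio_le_two (h : IsJostPair q s u v) (x : ℝ) :
    ‖1 + reflectionRatio u v x‖ ≤ 2 := by
  refine (norm_add_le _ _).trans ?_
  rw [norm_one]
  linarith [h.norm_reflectionRatio_le_one x]

lemma locallyLipschitz_reflectionRatio (h : IsJostPair q s u v) :
    LocallyLipschitz (reflectionRatio u v) := by
  simpa only [reflectionRatio, div_eq_mul_inv] using! locallyLipschitz_mul
    (h.locallyLipschitz_fst.sub h.locallyLipschitz_snd)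
    (locallyLipschitz_inv (h.locallyLipschitz_fst.add h.locallyLipschitz_snd) h.add_ne_zero)

lemma norm_mul_one_add_reflectionRatio_le (h : IsJostPair q s u v) (x : ℝ) :
    ‖(q x : ℂ) * (1 + reflectionRatio u v x)‖ ≤ 2 * |q x| := by
  rw [norm_mul, Complex.norm_real, Real.norm_eq_abs, mul_comm]
  gcongr
  exact h.norm_one_add_reflectionRatio_le_two x

lemma integrable_mul_one_add_reflectionRatio (h : IsJostPair q s u v) :
    Integrable (fun x ↦ (q x : ℂ) * (1 + reflectionRatio u v x)) :=
  h.potential.integrable.ofReal.mul_bdd (c := 2)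
    (continuous_const.add h.locallyLipschitz_reflectionRatio.continuous).aestronglyMeasurable
    (Eventually.of_forall h.norm_one_add_reflectionRatio_le_two)

lemma norm_phase_le (h : IsJostPair q s u v) : ‖phase q u v‖ ≤ 2 * ∫ x, |q x| := by
  rw [phase, ← integral_const_mul]
  exact norm_integral_le_of_norm_le (h.potential.integrable.abs.const_mul 2)
    (Eventually.of_forall h.norm_mul_one_add_reflectionRatio_le)

lemma rightAmp_eq (h : IsJostPair q s u v) (x : ℝ) : rightAmp s u v x =
    2 * exp (-∫ t in Set.Ioi x, s / 2 * (q t * (1 + reflectionRatio u v t))) := by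
  refine eq_mul_exp_neg_integral_Ioi h.locallyLipschitz_rightAmp
    (h.integrable_mul_one_add_reflectionRatio.const_mul (s / 2)) (fun x ↦ ?_) ?_
    h.tendsto_rightAmp_atTop x
  · obtain ⟨M, hM⟩ := h.potential.bounded
    refine .of_bound (‖s / 2‖ * (2 * M)) (mem_inf_of_right (hM.mono fun t ht ↦ ?_))
    rw [norm_mul, norm_one, mul_one]
    gcongr
    exact (h.norm_mul_one_add_reflectionRatio_le t).trans (by gcongr)
  · refine h.hasDerivAt_rightAmp.mono fun t ht ↦ ht.congr_deriv ?_
    have hr : (1 + reflectionRatio u v t) * (u t + v t) = 2 * u t := by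
      rw [reflectionRatio, one_add_mul, div_mul_cancel₀ _ (h.add_ne_zero t)]
      ring
    rw [rightAmp]
    linear_combination -(s / 2) * q t * exp (s * t) * hr

lemma norm_integral_Ioi_le (h : IsJostPair q s u v) (x : ℝ) :
    ‖∫ t in Set.Ioi x, s / 2 * (q t * (1 + reflectionRatio u v t))‖ ≤ ‖s‖ * ∫ t, |q t| := by
  calc ‖∫ t in Set.Ioi x, s / 2 * (q t * (1 + reflectionRatio u v t))‖
      ≤ ∫ t in Set.Ioi x, ‖s‖ * |q t| := by
        refine norm_integral_le_of_norm_le (h.potential.integrable.abs.const_mul _).integrableOn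
          (Eventually.of_forall fun t ↦ ?_)
        rw [norm_mul, norm_div, Complex.norm_ofNat]
        linarith [mul_le_mul_of_nonneg_left (h.norm_mul_one_add_reflectionRatio_le t)
          (div_nonneg (norm_nonneg s) zero_le_two)]
    _ ≤ ‖s‖ * ∫ t, |q t| := by
        rw [integral_const_mul]
        exact mul_le_mul_of_nonneg_left (setIntegral_le_integral h.potential.integrable.abs
          (Eventually.of_forall fun _ ↦ abs_nonneg _)) (norm_nonneg s)

lemma norm_rightAmp_le (h : IsJostPair q s u v) (x : ℝ) :
    ‖rightAmp s u v x‖ ≤ 2 * Real.exp (‖s‖ * ∫ t, |q t|) := by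
  rw [h.rightAmp_eq, norm_mul, Complex.norm_exp, Complex.norm_ofNat]
  gcongr
  exact (Complex.re_le_norm _).trans ((norm_neg _).trans_le (h.norm_integral_Ioi_le x))

lemma le_norm_rightAmp (h : IsJostPair q s u v) (x : ℝ) :
    2 * Real.exp (-(‖s‖ * ∫ t, |q t|)) ≤ ‖rightAmp s u v x‖ := by
  rw [h.rightAmp_eq, norm_mul, Complex.norm_exp, Complex.norm_ofNat, Complex.neg_re]
  gcongr
  exact (Complex.re_le_norm _).trans (h.norm_integral_Ioi_le x)

lemma norm_exp_mul_le (h : IsJostPair q s u v) (x : ℝ) :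
    ‖exp (s * x) * u x‖ ≤ 2 * Real.exp (‖s‖ * ∫ t, |q t|) := by
  refine le_trans ?_ (h.norm_rightAmp_le x)
  have hu : ‖2 * u x‖ ≤ ‖u x + v x‖ + ‖u x - v x‖ := by
    have hsum : 2 * u x = (u x + v x) + (u x - v x) := by ring
    rw [hsum]
    exact norm_add_le _ _
  rw [norm_mul, Complex.norm_ofNat] at hu
  rw [rightAmp, norm_mul, norm_mul]
  gcongr
  linarith [h.norm_sub_lt_norm_add x]

lemma norm_reflectionRatio_le (h : IsJostPair q s u v) (x : ℝ) :
    ‖reflectionRatio u v x‖ ≤ ‖s‖ * (∫ t, |q t|) * Real.exp (2 * (‖s‖ * ∫ t, |q t|)) := by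
  set N := ‖s‖ * ∫ t, |q t| with hN
  have hr : reflectionRatio u v x * rightAmp s u v x = exp (s * x) * (u x - v x) := by
    rw [reflectionRatio, rightAmp, mul_left_comm, div_mul_cancel₀ _ (h.add_ne_zero x)]
  have hle : ‖reflectionRatio u v x‖ * (2 * Real.exp (-N)) ≤ N * (2 * Real.exp N) :=
    calc ‖reflectionRatio u v x‖ * (2 * Real.exp (-N))
        ≤ ‖reflectionRatio u v x‖ * ‖rightAmp s u v x‖ := by
          gcongr
          exact h.le_norm_rightAmp x
      _ = ‖exp (s * x) * (u x - v x)‖ := by rw [← norm_mul, hr]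
      _ ≤ ‖s‖ * (2 * Real.exp N) * ∫ t in Set.Ioi x, |q t| :=
          h.norm_exp_mul_sub_le fun t _ ↦ h.norm_exp_mul_le t
      _ ≤ ‖s‖ * (2 * Real.exp N) * ∫ t, |q t| := by
          gcongr ?_ * ?_
          exact setIntegral_le_integral h.potential.integrable.abs
            (Eventually.of_forall fun _ ↦ abs_nonneg _)
      _ = N * (2 * Real.exp N) := by rw [hN]; ring
  calc ‖reflectionRatio u v x‖
      = ‖reflectionRatio u v x‖ * (2 * Real.exp (-N)) * (Real.exp N / 2) := by
        rw [Real.exp_neg]; field_simp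
    _ ≤ N * (2 * Real.exp N) * (Real.exp N / 2) := by gcongr
    _ = N * Real.exp (2 * N) := by rw [two_mul N, Real.exp_add]; ring

lemma norm_phase_sub_integral_le (h : IsJostPair q s u v) :
    ‖phase q u v - (∫ x, q x : ℝ)‖ ≤
      (∫ x, |q x|) * (‖s‖ * (∫ x, |q x|) * Real.exp (2 * (‖s‖ * ∫ x, |q x|))) := by
  have hq : ((∫ x, q x : ℝ) : ℂ) = ∫ x, (q x : ℂ) := integral_ofReal.symm
  have hint : Integrable (fun x ↦ (q x : ℂ)) := h.potential.integrable.ofReal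
  rw [hq, phase, ← integral_mul_const,
    ← integral_sub h.integrable_mul_one_add_reflectionRatio hint]
  refine norm_integral_le_of_norm_le (h.potential.integrable.abs.mul_const _)
    (Eventually.of_forall fun x ↦ ?_)
  rw [mul_one_add, add_sub_cancel_left, norm_mul, Complex.norm_real, Real.norm_eq_abs]
  gcongr
  exact h.norm_reflectionRatio_le x

lemma tendsto_rightAmp_atBot (h : IsJostPair q s u v) :
    Tendsto (rightAmp s u v) atBot (𝓝 (2 * invTransmission q s u v)) := by
  have htail := (aecover_Ioi (μ := volume) tendsto_id).integral_tendsto_of_countably_generated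
    (h.integrable_mul_one_add_reflectionRatio.const_mul (s / 2))
  rw [integral_const_mul] at htail
  exact (htail.neg.cexp.const_mul 2).congr fun x ↦ (h.rightAmp_eq x).symm

lemma norm_rightAmp_sub_le (h : IsJostPair q s u v) (x : ℝ) :
    ‖rightAmp s u v x - 2 * invTransmission q s u v‖ ≤
      ‖s‖ * (2 * Real.exp (‖s‖ * ∫ t, |q t|)) * ∫ t in Set.Iic x, |q t| := by
  have hle (t : ℝ) : ‖s * q t * (exp (s * t) * u t)‖ ≤
      ‖s‖ * (2 * Real.exp (‖s‖ * ∫ t, |q t|)) * |q t| := by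
    rw [norm_mul, norm_mul, Complex.norm_real, Real.norm_eq_abs, mul_right_comm]
    gcongr
    exact h.norm_exp_mul_le t
  have hint := (h.potential.integrable.abs.const_mul
    (‖s‖ * (2 * Real.exp (‖s‖ * ∫ t, |q t|)))).integrableOn (s := Set.Iic x)
  rw [← integral_Iic_eq_sub_of_tendsto h.locallyLipschitz_rightAmp h.hasDerivAt_rightAmp
    (integrableOn_of_ae_hasDerivAt h.hasDerivAt_rightAmp measurableSet_Iic hint fun t _ ↦ hle t)
    h.tendsto_rightAmp_atBot, ← integral_const_mul]
  exact norm_integral_le_of_norm_le hint (Eventually.of_forall hle)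

lemma norm_exp_neg_mul_le (h : IsJostPair q s u v) (hs : s.re = 0) (x : ℝ) :
    ‖exp (-s * x) * u x‖ ≤ 2 * Real.exp (‖s‖ * ∫ t, |q t|) := by
  have hle := h.norm_exp_mul_le x
  rw [norm_mul, norm_cexp_mul_ofReal, hs] at hle
  rwa [norm_mul, norm_cexp_mul_ofReal, Complex.neg_re, hs, neg_zero]

lemma integrable_mul_exp_neg_mul (h : IsJostPair q s u v) (hs : s.re = 0) :
    Integrable (fun x : ℝ ↦ q x * (exp (-s * x) * u x)) :=
  h.potential.integrable.ofReal.mul_bdd (c := 2 * Real.exp (‖s‖ * ∫ t, |q t|))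
    ((locallyLipschitz_cexp_mul (-s)).continuous.mul
      h.locallyLipschitz_fst.continuous).aestronglyMeasurable
    (Eventually.of_forall (h.norm_exp_neg_mul_le hs))

lemma tendsto_leftAmp_atBot (h : IsJostPair q s u v) (hs : s.re = 0) :
    Tendsto (leftAmp s u v) atBot (𝓝 (s * bornIntegral q s u)) := by
  have hint := (h.integrable_mul_exp_neg_mul hs).const_mul s
  have htail := (aecover_Ioi (μ := volume) tendsto_id).integral_tendsto_of_countably_generated hint
  rw [integral_const_mul] at htail
  refine htail.congr fun x ↦ ?_
  have hleft := integral_Ioi_eq_sub_of_tendsto h.locallyLipschitz_leftAmp h.hasDerivAt_leftAmp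
    (h.integrableOn_deriv_leftAmp fun t _ ↦ h.norm_exp_mul_le t) h.tendsto_leftAmp_atTop (x := x)
  rw [zero_sub] at hleft
  rw [← neg_inj, ← hleft, ← integral_neg]
  simp only [id, neg_mul, mul_assoc]

lemma norm_rightAmp_sq_sub_norm_leftAmp_sq (hs : s.re = 0) (u v : ℝ → ℂ) (x : ℝ) :
    ‖rightAmp s u v x‖ ^ 2 - ‖leftAmp s u v x‖ ^ 2 = 4 * (u x * conj (v x)).re := by
  rw [rightAmp, leftAmp, norm_mul, norm_mul, norm_cexp_mul_ofReal, norm_cexp_mul_ofReal,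
    Complex.neg_re, hs, neg_zero, zero_mul, Real.exp_zero, one_mul, one_mul,
    norm_add_sq_sub_norm_sub_sq]

lemma norm_invTransmission_sq (h : IsJostPair q s u v) (hs : s.re = 0) :
    ‖invTransmission q s u v‖ ^ 2 = 1 + ‖s * bornIntegral q s u / 2‖ ^ 2 := by
  have hconst (x : ℝ) : ‖rightAmp s u v x‖ ^ 2 - ‖leftAmp s u v x‖ ^ 2 =
      ‖rightAmp s u v 0‖ ^ 2 - ‖leftAmp s u v 0‖ ^ 2 := by
    rw [norm_rightAmp_sq_sub_norm_leftAmp_sq hs, norm_rightAmp_sq_sub_norm_leftAmp_sq hs,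
      h.flux_eq hs]
  have htop := (h.tendsto_rightAmp_atTop.norm.pow 2).sub (h.tendsto_leftAmp_atTop.norm.pow 2)
  have hbot := (h.tendsto_rightAmp_atBot.norm.pow 2).sub
    ((h.tendsto_leftAmp_atBot hs).norm.pow 2)
  simp only [hconst] at htop hbot
  have heq := (tendsto_nhds_unique tendsto_const_nhds hbot).symm.trans
    (tendsto_nhds_unique tendsto_const_nhds htop)
  rw [norm_mul, Complex.norm_ofNat, norm_zero] at heq
  rw [norm_div, Complex.norm_ofNat]
  linarith

end IsJostPair

/-! ### Low frequency -/

lemma IsJostPair.eq_of_scattering_relation (h : IsJostPair q s u v) (hs : s.re = 0)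
    {w : ℝ → ℂ} {α β : ℂ} (hw : Tendsto (fun x : ℝ ↦ exp (-s * x) * w x) atBot (𝓝 1))
    (hu : ∀ x, u x = α * w x + β * conj (w x)) :
    s * bornIntegral q s u = 2 * α ∧ invTransmission q s u v = β := by
  have hconj (x : ℝ) : conj (exp (-s * x) * w x) = exp (s * x) * conj (w x) := by
    have hs' : conj s = -s := Complex.ext (by simp [hs]) (by simp)
    rw [map_mul, ← Complex.exp_conj, map_mul, map_neg, hs', neg_neg, Complex.conj_ofReal]
  have hwc : Tendsto (fun x : ℝ ↦ exp (s * x) * conj (w x)) atBot (𝓝 1) := by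
    simpa only [hconj, map_one, Function.comp_def] using
      (Complex.continuous_conj.tendsto 1).comp hw
  have hsum : Tendsto (fun x : ℝ ↦ leftAmp s u v x +
      exp (-(2 * s) * x) * (rightAmp s u v x - 2 * β * (exp (s * x) * conj (w x)))) atBot
      (𝓝 (2 * α)) := by
    have := hw.const_mul (2 * α)
    rw [mul_one] at this
    refine this.congr fun x ↦ ?_
    have h1 : exp (-(2 * s) * x) * exp (s * x) = exp (-s * x) := by
      rw [← Complex.exp_add]
      congr 1
      ring
    rw [leftAmp, rightAmp]
    linear_combination (2 * β * conj (w x) - u x - v x) * h1 - 2 * exp (-s * x) * hu x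
  have hlim := limits_of_tendsto_add_cexp_mul
    (fun c ↦ tendsto_atBot_add_const_right _ c tendsto_id) (by simp [hs])
    (neg_ne_zero.2 (mul_ne_zero two_ne_zero h.ne_zero)) (h.tendsto_leftAmp_atBot hs)
    (h.tendsto_rightAmp_atBot.sub (hwc.const_mul (2 * β))) hsum
  exact ⟨hlim.1, by linear_combination hlim.2 / 2⟩

section LowFrequency

variable {ι : Type*} {l : Filter ι} {s : ι → ℂ} {u v : ι → ℝ → ℂ}

lemma tendsto_rightAmp_of_tendsto_zero (h : ∀ᶠ i in l, IsJostPair q (s i) (u i) (v i))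
    (hs : Tendsto s l (𝓝 0)) (x : ℝ) :
    Tendsto (fun i ↦ rightAmp (s i) (u i) (v i) x) l (𝓝 2) := by
  have hexponent : Tendsto
      (fun i ↦ ∫ t in Set.Ioi x, s i / 2 * (q t * (1 + reflectionRatio (u i) (v i) t))) l (𝓝 0) :=
    squeeze_zero_norm' (h.mono fun i hi ↦ hi.norm_integral_Ioi_le x)
      (by simpa using hs.norm.mul_const (∫ t, |q t|))
  have := hexponent.neg.cexp.const_mul 2
  rw [neg_zero, Complex.exp_zero, mul_one] at this
  exact this.congr' (h.mono fun i hi ↦ (hi.rightAmp_eq x).symm)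

lemma tendsto_norm_mul_exp_of_tendsto_zero (hs : Tendsto s l (𝓝 0)) (N : ℝ) :
    Tendsto (fun i ↦ ‖s i‖ * N * Real.exp (2 * (‖s i‖ * N))) l (𝓝 0) := by
  have hcont : Continuous fun z : ℂ ↦ ‖z‖ * N * Real.exp (2 * (‖z‖ * N)) := by fun_prop
  simpa [Function.comp_def] using (hcont.tendsto 0).comp hs

lemma tendsto_reflectionRatio_of_tendsto_zero
    (h : ∀ᶠ i in l, IsJostPair q (s i) (u i) (v i)) (hs : Tendsto s l (𝓝 0)) (x : ℝ) :
    Tendsto (fun i ↦ reflectionRatio (u i) (v i) x) l (𝓝 0) :=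
  squeeze_zero_norm' (h.mono fun _ hi ↦ hi.norm_reflectionRatio_le x)
    (tendsto_norm_mul_exp_of_tendsto_zero hs _)

lemma tendsto_phase_of_tendsto_zero (h : ∀ᶠ i in l, IsJostPair q (s i) (u i) (v i))
    (hs : Tendsto s l (𝓝 0)) :
    Tendsto (fun i ↦ phase q (u i) (v i)) l (𝓝 (∫ x, q x : ℝ)) := by
  rw [tendsto_iff_norm_sub_tendsto_zero]
  refine squeeze_zero' (Eventually.of_forall fun _ ↦ norm_nonneg _)
    (h.mono fun _ hi ↦ hi.norm_phase_sub_integral_le) ?_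
  simpa using (tendsto_norm_mul_exp_of_tendsto_zero hs (∫ x, |q x|)).const_mul (∫ x, |q x|)

lemma tendsto_invTransmission_of_tendsto_zero (h : ∀ᶠ i in l, IsJostPair q (s i) (u i) (v i))
    (hs : Tendsto s l (𝓝 0)) :
    Tendsto (fun i ↦ invTransmission q (s i) (u i) (v i)) l (𝓝 1) := by
  have := ((hs.div_const 2).mul (tendsto_phase_of_tendsto_zero h hs)).neg.cexp
  rwa [zero_div, zero_mul, neg_zero, Complex.exp_zero] at this

lemma tendsto_exp_neg_mul_of_tendsto_zero (h : ∀ᶠ i in l, IsJostPair q (s i) (u i) (v i))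
    (hs : Tendsto s l (𝓝 0)) (x : ℝ) :
    Tendsto (fun i ↦ exp (-s i * x) * u i x) l (𝓝 1) := by
  have hexp : Tendsto (fun i ↦ exp (-(2 * s i) * x)) l (𝓝 1) := by
    simpa using ((hs.const_mul 2).neg.mul_const (x : ℂ)).cexp
  have hlim := hexp.mul ((tendsto_rightAmp_of_tendsto_zero h hs x).mul
    (((tendsto_reflectionRatio_of_tendsto_zero h hs x).const_add 1).div_const 2))
  norm_num only [mul_one, add_zero] at hlim
  refine hlim.congr' (h.mono fun i hi ↦ ?_)
  have hexp2 : exp (-(2 * s i) * x) * exp (s i * x) = exp (-s i * x) := by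
    rw [← Complex.exp_add]
    congr 1
    ring
  have hr : (u i x + v i x) * ((1 + reflectionRatio (u i) (v i) x) / 2) = u i x := by
    rw [reflectionRatio, mul_div_assoc', mul_one_add, mul_div_cancel₀ _ (hi.add_ne_zero x)]
    ring
  rw [rightAmp, mul_assoc, hr, ← mul_assoc, hexp2]

lemma tendsto_bornIntegral_of_tendsto_zero [l.IsCountablyGenerated]
    (h : ∀ᶠ i in l, IsJostPair q (s i) (u i) (v i)) (hs : Tendsto s l (𝓝 0))
    (hre : ∀ᶠ i in l, (s i).re = 0) (hq : Integrable q) :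
    Tendsto (fun i ↦ bornIntegral q (s i) (u i)) l (𝓝 (∫ x, q x : ℝ)) := by
  have hlim : ((∫ x, q x : ℝ) : ℂ) = ∫ x, (q x : ℂ) * 1 := by
    simp only [mul_one]
    exact integral_ofReal.symm
  rw [hlim]
  refine tendsto_integral_filter_of_dominated_convergence
    (fun x ↦ |q x| * (2 * Real.exp (1 * ∫ t, |q t|))) ?_ ?_ (hq.abs.mul_const _)
    (Eventually.of_forall fun x ↦ (tendsto_exp_neg_mul_of_tendsto_zero h hs x).const_mul _)
  · filter_upwards [h, hre] with i hi hi0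
    exact (hi.integrable_mul_exp_neg_mul hi0).1
  · filter_upwards [h, hre, hs.norm.eventually_le_const (u := 1) (by simp)] with i hi hi0 hi1
    refine Eventually.of_forall fun x ↦ ?_
    rw [norm_mul, Complex.norm_real, Real.norm_eq_abs]
    gcongr
    refine (hi.norm_exp_neg_mul_le hi0 x).trans ?_
    have : 0 ≤ ∫ t, |q t| := integral_nonneg fun t ↦ abs_nonneg _
    gcongr

end LowFrequency

/-- Jost pairs for all `s ≠ 0` in the closed right half-plane, depending holomorphically on `s` in
the interior and continuously up to the imaginary axis, except at `0`. -/
structure IsJostFamily (q : ℝ → ℝ) (u v : ℂ → ℝ → ℂ) : Prop where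
  isJostPair : ∀ s : ℂ, 0 ≤ s.re → s ≠ 0 → IsJostPair q s (u s) (v s)
  differentiableOn_fst : ∀ x, DifferentiableOn ℂ (fun s ↦ u s x) {s | 0 < s.re}
  differentiableOn_snd : ∀ x, DifferentiableOn ℂ (fun s ↦ v s x) {s | 0 < s.re}
  continuousOn_fst : ∀ x, ContinuousOn (fun s ↦ u s x) ({s | 0 ≤ s.re} \ {0})
  continuousOn_snd : ∀ x, ContinuousOn (fun s ↦ v s x) ({s | 0 ≤ s.re} \ {0})

namespace IsJostFamily

variable {u v : ℂ → ℝ → ℂ}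

lemma isJostPair_of_pos (h : IsJostFamily q u v) {s : ℂ} (hs : 0 < s.re) :
    IsJostPair q s (u s) (v s) :=
  h.isJostPair s hs.le (by rintro rfl; exact lt_irrefl _ hs)

lemma isJostPair_mul_I (h : IsJostFamily q u v) {t : ℝ} (ht : t ≠ 0) :
    IsJostPair q (t * I) (u (t * I)) (v (t * I)) :=
  h.isJostPair _ (by simp) (by simpa using ht)

lemma isPotential (h : IsJostFamily q u v) : IsPotential q :=
  (h.isJostPair 1 (by simp) one_ne_zero).potential

lemma tendstoLocallyUniformlyOn_rightAmp (h : IsJostFamily q u v) :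
    TendstoLocallyUniformlyOn (fun (x : ℝ) s ↦ rightAmp s (u s) (v s) x)
      (fun s ↦ 2 * invTransmission q s (u s) (v s)) atBot ({s | 0 ≤ s.re} \ {0}) := by
  refine tendstoLocallyUniformlyOn_iff_forall_tendsto.2 fun s₀ _ ↦ ?_
  rw [tendsto_uniformity_iff_dist_tendsto_zero]
  have hcont : Continuous fun s : ℂ ↦ ‖s‖ * (2 * Real.exp (‖s‖ * ∫ t, |q t|)) := by fun_prop
  have htail : Tendsto (fun x ↦ ∫ t in Set.Iic x, |q t|) atBot (𝓝 0) :=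
    tendsto_integral_Iic_zero tendsto_id
  have hbound := ((hcont.tendsto s₀).mono_left nhdsWithin_le_nhds |>.comp tendsto_snd).mul
    (htail.comp (tendsto_fst (g := 𝓝[{s : ℂ | 0 ≤ s.re} \ {0}] s₀)))
  rw [mul_zero] at hbound
  refine squeeze_zero' (Eventually.of_forall fun _ ↦ dist_nonneg) ?_ hbound
  filter_upwards [tendsto_snd.eventually self_mem_nhdsWithin] with p hp
  rw [dist_eq_norm']
  exact (h.isJostPair p.2 hp.1 hp.2).norm_rightAmp_sub_le p.1

lemma differentiableOn_invTransmission (h : IsJostFamily q u v) :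
    DifferentiableOn ℂ (fun s ↦ invTransmission q s (u s) (v s)) {s | 0 < s.re} := by
  have hsub : {s : ℂ | 0 < s.re} ⊆ {s | 0 ≤ s.re} \ {0} := by
    rintro s (hs : 0 < s.re)
    exact ⟨hs.le, by rintro rfl; exact lt_irrefl _ hs⟩
  have hdiff := (h.tendstoLocallyUniformlyOn_rightAmp.mono hsub).differentiableOn
    (Eventually.of_forall fun x ↦ ?_) (isOpen_lt continuous_const Complex.continuous_re)
  · simpa using hdiff.const_mul (2 : ℂ)⁻¹
  · have hexp : DifferentiableOn ℂ (fun s : ℂ ↦ exp (s * x)) {s | 0 < s.re} := by fun_prop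
    exact hexp.mul ((h.differentiableOn_fst x).add (h.differentiableOn_snd x))

lemma continuousOn_invTransmission_diff (h : IsJostFamily q u v) :
    ContinuousOn (fun s ↦ invTransmission q s (u s) (v s)) ({s | 0 ≤ s.re} \ {0}) := by
  have hcont := h.tendstoLocallyUniformlyOn_rightAmp.continuousOn
    (Eventually.of_forall fun x ↦ ?_).frequently
  · simpa using hcont.const_mul (2 : ℂ)⁻¹
  · have hexp : Continuous (fun s : ℂ ↦ exp (s * x)) := by fun_prop
    exact hexp.continuousOn.mul ((h.continuousOn_fst x).add (h.continuousOn_snd x))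

lemma diffContOnCl_invTransmission (h : IsJostFamily q u v) :
    DiffContOnCl ℂ (fun s ↦ invTransmission q s (u s) (v s)) {s | 0 < s.re} := by
  refine ⟨h.differentiableOn_invTransmission, ?_⟩
  rw [Complex.closure_setOfPred_lt_re 0]
  intro s hs
  rw [← continuousWithinAt_sdiff_singleton (y := 0)]
  rcases eq_or_ne s 0 with rfl | hs0
  · rw [ContinuousWithinAt]
    simpa [invTransmission] using tendsto_invTransmission_of_tendsto_zero
      (l := 𝓝[{s : ℂ | 0 ≤ s.re} \ {0}] 0) (s := id) (u := u) (v := v)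
      (eventually_nhdsWithin_of_forall fun s hs ↦ h.isJostPair s hs.1 hs.2)
      (tendsto_id.mono_left nhdsWithin_le_nhds)
  · exact h.continuousOn_invTransmission_diff s ⟨hs, hs0⟩

end IsJostFamily

/-! ### The Riccati equation and high frequency -/

lemma IsJostPair.hasDerivAt_reflectionRatio (h : IsJostPair q s u v) :
    ∀ᵐ x, HasDerivAt (reflectionRatio u v)
      (s * (2 * reflectionRatio u v x - q x / 2 * (1 + reflectionRatio u v x) ^ 2)) x := by
  filter_upwards [h.hasDerivAt_fst, h.hasDerivAt_snd] with x hu hv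
  have h0 := h.add_ne_zero x
  refine ((hu.sub hv).div (hu.add hv) h0).congr_deriv ?_
  simp only [reflectionRatio, Pi.add_apply, Pi.sub_apply]
  field_simp
  ring

/-- The refractive index `n` takes values in `[m, M]`, with `m > 0`, and `1 - n` is integrable. -/
structure IsRefractiveIndex (n : ℝ → ℝ) (m M : ℝ) : Prop where
  pos : 0 < m
  lower : ∀ᵐ x, m ≤ n x
  upper : ∀ᵐ x, n x ≤ M
  integrable : Integrable (fun x ↦ 1 - n x)

/-- The reflection coefficient `(1 - n) / (1 + n)` of an interface between the indices `1` and `n`,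
towards which the local reflection coefficient relaxes at high frequency. -/
def fresnel (n : ℝ) : ℝ := (1 - n) / (1 + n)

section Fresnel

variable {n : ℝ}

lemma one_sub_eq_fresnel_mul (hn : 0 < n) : 1 - n = fresnel n * (1 + n) := by
  rw [fresnel, div_mul_cancel₀ _ (by positivity)]

lemma abs_fresnel_le_one (hn : 0 < n) : |fresnel n| ≤ 1 := by
  rw [fresnel, abs_div, abs_of_pos (by positivity : 0 < 1 + n)]
  refine div_le_one_of_le₀ ?_ (by positivity)
  rw [abs_le]
  constructor <;> linarith

lemma abs_fresnel_le (hn : 0 < n) : |fresnel n| ≤ |1 - n| := by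
  rw [fresnel, abs_div, abs_of_pos (by positivity : 0 < 1 + n)]
  exact div_le_self (abs_nonneg _) (by linarith)

/-- The factor `K` for which the Riccati equation reads `r' = s K (r - ρ)`, where
`ρ = fresnel n`. -/
def riccatiRate (n : ℝ) (r : ℂ) : ℂ := (1 + n) ^ 2 / 2 * (1 - fresnel n * r)

lemma riccati_eq (hn : 0 < n) (r : ℂ) :
    2 * r - ((1 - n ^ 2 : ℝ) : ℂ) / 2 * (1 + r) ^ 2 = riccatiRate n r * (r - fresnel n) := by
  have hρ : (1 : ℂ) - n = fresnel n * (1 + n) := mod_cast one_sub_eq_fresnel_mul hn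
  rw [riccatiRate]
  push_cast
  linear_combination
    (-(1 + r) ^ 2 / 2 * (1 + n) + r / 2 * (1 - n + fresnel n * (1 + n)) + r * (1 + n)) * hρ

lemma min_le_re_riccatiRate (hn : 0 < n) {r : ℂ} (hr : ‖r‖ ≤ 1) :
    min 1 n ≤ (riccatiRate n r).re := by
  have hre : (fresnel n * r).re ≤ |fresnel n| := by
    refine (Complex.re_le_norm _).trans ?_
    rw [norm_mul, Complex.norm_real, Real.norm_eq_abs]
    exact mul_le_of_le_one_right (abs_nonneg _) hr
  have hρ : |1 - n| = |fresnel n| * (1 + n) := by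
    rw [one_sub_eq_fresnel_mul hn, abs_mul, abs_of_pos (by positivity : 0 < 1 + n)]
  have hK : (riccatiRate n r).re = (1 + n) ^ 2 / 2 * (1 - (fresnel n * r).re) := by
    have : riccatiRate n r = ((1 + n) ^ 2 / 2 : ℝ) * (1 - fresnel n * r) := by
      rw [riccatiRate]
      push_cast
      rfl
    rw [this, Complex.re_ofReal_mul, Complex.sub_re, Complex.one_re]
  rw [hK]
  calc min 1 n ≤ (1 + n) / 2 * (2 * min 1 n) := by
        rcases le_total 1 n with h | h <;> simp only [h, min_eq_left, min_eq_right] <;> nlinarith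
    _ = (1 + n) / 2 * (1 + n - |1 - n|) := by
        rcases le_total 1 n with h | h
        · rw [min_eq_left h, abs_of_nonpos (by linarith)]; ring
        · rw [min_eq_right h, abs_of_nonneg (by linarith)]; ring
    _ = (1 + n) ^ 2 / 2 * (1 - |fresnel n|) := by rw [hρ]; ring
    _ ≤ _ := by gcongr

lemma norm_riccatiRate_le (hn : 0 < n) {r : ℂ} (hr : ‖r‖ ≤ 1) :
    ‖riccatiRate n r‖ ≤ (1 + n) ^ 2 := by
  have hle : ‖1 - fresnel n * r‖ ≤ 2 := by
    refine (norm_sub_le _ _).trans ?_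
    rw [norm_mul, Complex.norm_real, Real.norm_eq_abs, norm_one]
    linarith [mul_le_one₀ (abs_fresnel_le_one hn) (norm_nonneg r) hr]
  have hsq : ‖(1 + (n : ℂ)) ^ 2 / 2‖ = (1 + n) ^ 2 / 2 := by
    have : (1 + (n : ℂ)) ^ 2 / 2 = ((1 + n) ^ 2 / 2 : ℝ) := by push_cast; rfl
    rw [this, Complex.norm_of_nonneg (by positivity)]
  rw [riccatiRate, norm_mul, hsq]
  linarith [mul_le_mul_of_nonneg_left hle (by positivity : 0 ≤ (1 + n) ^ 2 / 2)]

end Fresnel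

namespace IsRefractiveIndex

variable {n : ℝ → ℝ} {m M : ℝ}

lemma ae_pos (hn : IsRefractiveIndex n m M) : ∀ᵐ x, 0 < n x :=
  hn.lower.mono fun _ hx ↦ hn.pos.trans_le hx

lemma aestronglyMeasurable (hn : IsRefractiveIndex n m M) : AEStronglyMeasurable n :=
  ((aestronglyMeasurable_const (b := (1 : ℝ))).sub hn.integrable.1).congr
    (Eventually.of_forall fun x ↦ sub_sub_cancel 1 (n x))

lemma aestronglyMeasurable_fresnel (hn : IsRefractiveIndex n m M) :
    AEStronglyMeasurable (fun x ↦ fresnel (n x)) :=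
  (hn.integrable.1.aemeasurable.div
    (hn.aestronglyMeasurable.aemeasurable.const_add 1)).aestronglyMeasurable

lemma integrable_fresnel (hn : IsRefractiveIndex n m M) : Integrable (fun x ↦ fresnel (n x)) :=
  hn.integrable.abs.mono' hn.aestronglyMeasurable_fresnel
    (hn.ae_pos.mono fun _ hx ↦ abs_fresnel_le hx)

lemma isPotential (hn : IsRefractiveIndex n m M) : IsPotential (fun x ↦ 1 - n x ^ 2) where
  integrable := by
    have hint := hn.integrable.bdd_mul (c := 1 + M)
      ((aestronglyMeasurable_const (b := (1 : ℝ))).add hn.aestronglyMeasurable) ?_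
    · exact hint.congr (Eventually.of_forall fun x ↦ by simp only [Pi.add_apply]; ring)
    · filter_upwards [hn.ae_pos, hn.upper] with x hpos hM
      rw [Pi.add_apply, Real.norm_of_nonneg (by positivity)]
      gcongr
  bounded := by
    refine ⟨1 + M ^ 2, ?_⟩
    filter_upwards [hn.ae_pos, hn.upper] with x hpos hM
    rw [abs_le]
    constructor <;> nlinarith
  le_one := Eventually.of_forall fun x ↦ sub_le_self _ (sq_nonneg _)

end IsRefractiveIndex

section HighFrequency

open scoped RealInnerProductSpace

lemma re_mul_norm_sq_sub_le_inner (z e d : ℂ) :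
    z.re * ‖d‖ ^ 2 - ‖e‖ * ‖d‖ ≤ ⟪d, z * d + e⟫ := by
  have hz : ⟪d, z * d⟫ = z.re * ‖d‖ ^ 2 := by
    rw [Complex.inner, ← Complex.normSq_eq_norm_sq, Complex.normSq_apply]
    simp only [Complex.mul_re, Complex.mul_im, Complex.conj_re, Complex.conj_im]
    ring
  have he := (abs_le.1 (abs_real_inner_le_norm d e)).1
  rw [inner_add_right, hz]
  linarith

lemma tendsto_zero_of_forall_le_add_div {f : ℝ → ℝ} {A : ℝ} (hf : ∀ x, 0 ≤ f x)
    (h : ∀ δ > 0, ∃ B, ∀ x > 0, f x ≤ A * δ + B / x) : Tendsto f atTop (𝓝 0) := by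
  refine tendsto_order.2 ⟨fun a ha ↦ .of_forall fun x ↦ ha.trans_le (hf x), fun ε hε ↦ ?_⟩
  obtain ⟨δ, hδ, hAδ⟩ : ∃ δ > 0, A * δ < ε := by
    have : Tendsto (fun δ ↦ A * δ) (𝓝[>] 0) (𝓝 0) := by
      simpa using (tendsto_id'.2 (nhdsWithin_le_nhds (a := (0 : ℝ)))).const_mul A
    exact ((this.eventually_lt_const hε).and self_mem_nhdsWithin).exists.imp fun _ h ↦ h.symm
  obtain ⟨B, hB⟩ := h δ hδ
  have hlim : Tendsto (fun x ↦ A * δ + B / x) atTop (𝓝 (A * δ)) := by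
    simpa using (tendsto_const_nhds.div_atTop tendsto_id).const_add (A * δ)
  filter_upwards [hlim.eventually_lt_const hAδ, eventually_gt_atTop 0] with x hx hx0
  exact (hB x hx0).trans_lt hx

lemma le_inner_riccati {n m M s : ℝ} (hn : 0 < n) (hm : m ≤ n) (hM : n ≤ M) (hs : 0 ≤ s)
    {r z e : ℂ} (hr : ‖r‖ ≤ 1) :
    s * min 1 m * ‖r - z‖ ^ 2 - (s * ((1 + M) ^ 2 * ‖fresnel n - z‖) + ‖e‖) * ‖r - z‖ ≤
      ⟪r - z, s * (riccatiRate n r * (r - fresnel n)) - e⟫ := by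
  have hre : s * min 1 m ≤ (s * riccatiRate n r).re := by
    rw [Complex.re_ofReal_mul]
    gcongr
    exact (min_le_min_left 1 hm).trans (min_le_re_riccatiRate hn hr)
  have hnorm : ‖s * (riccatiRate n r * (z - fresnel n)) - e‖ ≤
      s * ((1 + M) ^ 2 * ‖fresnel n - z‖) + ‖e‖ := by
    refine (norm_sub_le _ _).trans ?_
    rw [norm_mul, norm_mul, Complex.norm_of_nonneg hs, norm_sub_rev z]
    gcongr
    exact (norm_riccatiRate_le hn hr).trans (by gcongr)
  calc _ ≤ (s * riccatiRate n r).re * ‖r - z‖ ^ 2 -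
        ‖s * (riccatiRate n r * (z - fresnel n)) - e‖ * ‖r - z‖ := by gcongr
    _ ≤ ⟪r - z, s * riccatiRate n r * (r - z) +
        (s * (riccatiRate n r * (z - fresnel n)) - e)⟫ := re_mul_norm_sq_sub_le_inner _ _ _
    _ = _ := by
      congr 1
      ring

lemma norm_one_sub_sq_mul_le {n M : ℝ} (hn : 0 ≤ n) (hM : n ≤ M) (r ρ z : ℂ) :
    ‖(1 - n ^ 2 : ℝ) * (r - ρ)‖ ≤ (1 + M ^ 2) * (‖r - z‖ + ‖ρ - z‖) := by
  have hq : |1 - n ^ 2| ≤ 1 + M ^ 2 := (abs_sub _ _).trans (by simpa using by gcongr)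
  rw [norm_mul, Complex.norm_real, Real.norm_eq_abs, norm_sub_rev ρ z]
  gcongr
  exact norm_sub_le_norm_sub_add_norm_sub r z ρ

namespace IsRefractiveIndex

variable {n : ℝ → ℝ} {m M s a b : ℝ} {g : ℝ → ℂ}

lemma hasDerivAt_reflectionRatio (hn : IsRefractiveIndex n m M)
    (h : IsJostPair (fun x ↦ 1 - n x ^ 2) s u v) :
    ∀ᵐ x, HasDerivAt (reflectionRatio u v) (s * (riccatiRate (n x) (reflectionRatio u v x) *
      (reflectionRatio u v x - fresnel (n x)))) x := by
  filter_upwards [h.hasDerivAt_reflectionRatio, hn.ae_pos] with x hx hpos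
  rwa [← riccati_eq hpos]

lemma integrable_norm_fresnel_sub (hn : IsRefractiveIndex n m M) (hgs : HasCompactSupport g)
    (hg : Continuous g) : Integrable (fun x ↦ ‖fresnel (n x) - g x‖) :=
  (hn.integrable_fresnel.ofReal.sub (hg.integrable_of_hasCompactSupport hgs)).norm

lemma mul_intervalIntegral_norm_reflectionRatio_sub_le (hn : IsRefractiveIndex n m M) (hs : 0 < s)
    (h : IsJostPair (fun x ↦ 1 - n x ^ 2) s u v) (hgs : HasCompactSupport g)
    (hg : ContDiff ℝ 1 g) (hab : a ≤ b) :
    min 1 m * ∫ x in a..b, ‖reflectionRatio u v x - g x‖ ≤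
      (1 + M) ^ 2 * (∫ x, ‖fresnel (n x) - g x‖) + (1 + ‖g b‖ + ∫ x, ‖deriv g x‖) / s := by
  have hρ := (hn.integrable_norm_fresnel_sub hgs hg.continuous).const_mul ((1 + M) ^ 2)
    |>.const_mul s
  have hg' : Integrable (fun x ↦ ‖deriv g x‖) :=
    ((hg.continuous_deriv le_rfl).integrable_of_hasCompactSupport hgs.deriv).norm
  have hderiv : ∀ᵐ x, HasDerivAt (reflectionRatio u v - g)
      (s * (riccatiRate (n x) (reflectionRatio u v x) *
        (reflectionRatio u v x - fresnel (n x))) - deriv g x) x :=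
    (hn.hasDerivAt_reflectionRatio h).mono fun x hx ↦
      hx.sub (hg.differentiable one_ne_zero x).hasDerivAt
  have hφ (x : ℝ) :
      0 ≤ s * ((1 + M) ^ 2 * ‖fresnel (n x) - g x‖) + ‖deriv g x‖ := by positivity
  have hmain := mul_integral_norm_le_of_le_inner (μ := s * min 1 m) hab
    (h.locallyLipschitz_reflectionRatio.sub hg.locallyLipschitz) hderiv hφ
    (hρ.add hg').intervalIntegrable ?_
  · have hint : ∫ x in a..b, (s * ((1 + M) ^ 2 * ‖fresnel (n x) - g x‖) + ‖deriv g x‖) ≤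
        s * ((1 + M) ^ 2 * ∫ x, ‖fresnel (n x) - g x‖) + ∫ x, ‖deriv g x‖ := by
      rw [intervalIntegral.integral_of_le hab, ← integral_const_mul, ← integral_const_mul,
        ← integral_add hρ hg']
      exact setIntegral_le_integral (hρ.add hg') (Eventually.of_forall hφ)
    have hbd : ‖reflectionRatio u v b - g b‖ ≤ 1 + ‖g b‖ :=
      (norm_sub_le _ _).trans (by gcongr; exact h.norm_reflectionRatio_le_one b)
    refine le_of_mul_le_mul_left ?_ hs
    rw [mul_add, mul_div_cancel₀ _ hs.ne', ← mul_assoc]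
    linarith [norm_nonneg (reflectionRatio u v a - g a)]
  · filter_upwards [hn.ae_pos, hn.lower, hn.upper] with x hpos hm hM
    exact le_inner_riccati hpos hm hM hs.le (h.norm_reflectionRatio_le_one x)

lemma integrable_one_sub_sq_mul (hn : IsRefractiveIndex n m M)
    (h : IsJostPair (fun x ↦ 1 - n x ^ 2) s u v) :
    Integrable (fun x ↦ ((1 - n x ^ 2 : ℝ) : ℂ) * (reflectionRatio u v x - fresnel (n x))) := by
  refine hn.isPotential.integrable.ofReal.mul_bdd (c := 1 + 1)
    (h.locallyLipschitz_reflectionRatio.continuous.aestronglyMeasurable.sub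
      hn.integrable_fresnel.ofReal.1) ?_
  filter_upwards [hn.ae_pos] with x hpos
  refine (norm_sub_le _ _).trans (add_le_add (h.norm_reflectionRatio_le_one x) ?_)
  simpa using abs_fresnel_le_one hpos

lemma phase_sub_eq_integral (hn : IsRefractiveIndex n m M)
    (h : IsJostPair (fun x ↦ 1 - n x ^ 2) s u v) :
    phase (fun x ↦ 1 - n x ^ 2) u v - (2 * ∫ x, (1 - n x) : ℝ) =
      ∫ x, ((1 - n x ^ 2 : ℝ) : ℂ) * (reflectionRatio u v x - fresnel (n x)) := by
  have hint : Integrable (fun x ↦ ((2 * (1 - n x) : ℝ) : ℂ)) := (hn.integrable.const_mul 2).ofReal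
  rw [phase, ← integral_const_mul, ← integral_complex_ofReal,
    ← integral_sub h.integrable_mul_one_add_reflectionRatio hint]
  refine integral_congr_ae ?_
  filter_upwards [hn.ae_pos] with x hpos
  have hρ : (1 : ℂ) - n x = fresnel (n x) * (1 + n x) := mod_cast one_sub_eq_fresnel_mul hpos
  push_cast
  linear_combination (n x - 1 : ℂ) * hρ

lemma mul_intervalIntegral_norm_one_sub_sq_mul_le (hn : IsRefractiveIndex n m M) (hs : 0 < s)
    (h : IsJostPair (fun x ↦ 1 - n x ^ 2) s u v) (hgs : HasCompactSupport g)
    (hg : ContDiff ℝ 1 g) (hab : a ≤ b) :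
    min 1 m * ∫ x in a..b, ‖((1 - n x ^ 2 : ℝ) : ℂ) * (reflectionRatio u v x - fresnel (n x))‖ ≤
      (1 + M ^ 2) * (((1 + M) ^ 2 + 1) * (∫ x, ‖fresnel (n x) - g x‖) +
        (1 + ‖g b‖ + ∫ x, ‖deriv g x‖) / s) := by
  have hρ := hn.integrable_norm_fresnel_sub hgs hg.continuous
  have hr : IntervalIntegrable (fun x ↦ ‖reflectionRatio u v x - g x‖) volume a b :=
    (h.locallyLipschitz_reflectionRatio.continuous.sub hg.continuous).norm.intervalIntegrable a b
  have hm : min 1 m ≤ 1 := min_le_left 1 m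
  have hm0 : 0 ≤ min 1 m := le_min zero_le_one hn.pos.le
  have hle : ∫ x in a..b, ‖((1 - n x ^ 2 : ℝ) : ℂ) * (reflectionRatio u v x - fresnel (n x))‖ ≤
      (1 + M ^ 2) * ((∫ x in a..b, ‖reflectionRatio u v x - g x‖) +
        ∫ x in a..b, ‖fresnel (n x) - g x‖) := by
    rw [← intervalIntegral.integral_add hr hρ.intervalIntegrable,
      ← intervalIntegral.integral_const_mul]
    refine intervalIntegral.integral_mono_ae hab
      (hn.integrable_one_sub_sq_mul h).norm.intervalIntegrable
      ((hr.add hρ.intervalIntegrable).const_mul _) ?_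
    filter_upwards [hn.ae_pos, hn.upper] with x hpos hM
    exact norm_one_sub_sq_mul_le hpos.le hM _ _ _
  have hρle : min 1 m * ∫ x in a..b, ‖fresnel (n x) - g x‖ ≤ ∫ x, ‖fresnel (n x) - g x‖ := by
    rw [intervalIntegral.integral_of_le hab]
    have h0 : 0 ≤ ∫ x in Set.Ioc a b, ‖fresnel (n x) - g x‖ := integral_nonneg fun _ ↦ norm_nonneg _
    exact (mul_le_of_le_one_left h0 hm).trans
      (setIntegral_le_integral hρ (Eventually.of_forall fun _ ↦ norm_nonneg _))
  calc _ ≤ (1 + M ^ 2) * (min 1 m * (∫ x in a..b, ‖reflectionRatio u v x - g x‖) +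
        min 1 m * ∫ x in a..b, ‖fresnel (n x) - g x‖) := by
        refine (mul_le_mul_of_nonneg_left hle hm0).trans_eq ?_
        ring
    _ ≤ _ := by
        refine mul_le_mul_of_nonneg_left ?_ (by positivity)
        linarith [hn.mul_intervalIntegral_norm_reflectionRatio_sub_le hs h hgs hg hab]

lemma mul_norm_phase_sub_le (hn : IsRefractiveIndex n m M) (hs : 0 < s)
    (h : IsJostPair (fun x ↦ 1 - n x ^ 2) s u v) (hgs : HasCompactSupport g)
    (hg : ContDiff ℝ 1 g) :
    min 1 m * ‖phase (fun x ↦ 1 - n x ^ 2) u v - (2 * ∫ x, (1 - n x) : ℝ)‖ ≤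
      (1 + M ^ 2) * (((1 + M) ^ 2 + 1) * (∫ x, ‖fresnel (n x) - g x‖) +
        (1 + ∫ x, ‖deriv g x‖) / s) := by
  have hm0 : 0 ≤ min 1 m := le_min zero_le_one hn.pos.le
  rw [hn.phase_sub_eq_integral h]
  refine (mul_le_mul_of_nonneg_left (norm_integral_le_integral_norm _) hm0).trans ?_
  have hleft := (intervalIntegral_tendsto_integral (hn.integrable_one_sub_sq_mul h).norm
    tendsto_neg_atTop_atBot tendsto_id).const_mul (min 1 m)
  have hgb : Tendsto (fun b ↦ ‖g b‖) atTop (𝓝 0) := by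
    simpa using (hgs.is_zero_at_infty.mono_left atTop_le_cocompact).norm
  have hright := ((((hgb.const_add 1).add_const (∫ x, ‖deriv g x‖)).div_const s).const_add
    (((1 + M) ^ 2 + 1) * ∫ x, ‖fresnel (n x) - g x‖)).const_mul (1 + M ^ 2)
  rw [add_zero] at hright
  refine le_of_tendsto_of_tendsto hleft hright ?_
  filter_upwards [eventually_ge_atTop 0] with b hb
  exact hn.mul_intervalIntegral_norm_one_sub_sq_mul_le hs h hgs hg (neg_le_self hb)

lemma tendsto_phase_atTop (hn : IsRefractiveIndex n m M) {u v : ℂ → ℝ → ℂ}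
    (h : ∀ s : ℝ, 0 < s → IsJostPair (fun x ↦ 1 - n x ^ 2) s (u s) (v s)) :
    Tendsto (fun s : ℝ ↦ phase (fun x ↦ 1 - n x ^ 2) (u s) (v s)) atTop
      (𝓝 (2 * ∫ x, (1 - n x) : ℝ)) := by
  have hm0 : 0 < min 1 m := lt_min one_pos hn.pos
  rw [tendsto_iff_norm_sub_tendsto_zero]
  refine tendsto_zero_of_forall_le_add_div (A := (1 + M ^ 2) * ((1 + M) ^ 2 + 1) / min 1 m)
    (fun _ ↦ norm_nonneg _) fun δ hδ ↦ ?_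
  obtain ⟨g, hgs, hg, hρg⟩ := exists_contDiff_integral_norm_sub_le hn.integrable_fresnel.ofReal hδ
  refine ⟨(1 + M ^ 2) * (1 + ∫ x, ‖deriv g x‖) / min 1 m, fun s hs ↦ ?_⟩
  refine le_of_mul_le_mul_left ((hn.mul_norm_phase_sub_le hs (h s hs) hgs hg).trans ?_) hm0
  calc _ ≤ (1 + M ^ 2) * (((1 + M) ^ 2 + 1) * δ + (1 + ∫ x, ‖deriv g x‖) / s) := by
        gcongr
        exact hρg
    _ = _ := by field_simp

end IsRefractiveIndex

end HighFrequency

/-! ### Reflection coefficients -/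

/-- The reflection coefficient `R` of a Jost pair, for `s` on the imaginary axis. -/
def reflectionCoeff (q : ℝ → ℝ) (s : ℂ) (u v : ℝ → ℂ) : ℂ :=
  s * bornIntegral q s u / (2 * invTransmission q s u v)

lemma invTransmission_ne_zero (q : ℝ → ℝ) (s : ℂ) (u v : ℝ → ℂ) : invTransmission q s u v ≠ 0 :=
  Complex.exp_ne_zero _

lemma IsJostPair.norm_invTransmission_sq_mul (h : IsJostPair q s u v) (hs : s.re = 0) :
    ‖invTransmission q s u v‖ ^ 2 * (1 - ‖reflectionCoeff q s u v‖ ^ 2) = 1 := by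
  have hG := norm_ne_zero_iff.2 (invTransmission_ne_zero q s u v)
  have hflux := h.norm_invTransmission_sq hs
  rw [reflectionCoeff, ← div_div, norm_div]
  field_simp
  linarith

lemma IsJostPair.reflectionCoeff_eq (h : IsJostPair q s u v) (hs : s.re = 0)
    {w : ℝ → ℂ} {α β : ℂ} (hw : Tendsto (fun x : ℝ ↦ exp (-s * x) * w x) atBot (𝓝 1))
    (hu : ∀ x, u x = α * w x + β * conj (w x)) : reflectionCoeff q s u v = α / β := by
  obtain ⟨hα, hβ⟩ := h.eq_of_scattering_relation hs hw hu
  rw [reflectionCoeff, hα, hβ, mul_div_mul_left _ _ two_ne_zero]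

lemma norm_invTransmission_eq_of_reflectionCoeff_eq {q₁ q₂ : ℝ → ℝ} {u₁ v₁ u₂ v₂ : ℝ → ℂ}
    (h₁ : IsJostPair q₁ s u₁ v₁) (h₂ : IsJostPair q₂ s u₂ v₂) (hs : s.re = 0)
    (hR : reflectionCoeff q₁ s u₁ v₁ = reflectionCoeff q₂ s u₂ v₂) :
    ‖invTransmission q₁ s u₁ v₁‖ = ‖invTransmission q₂ s u₂ v₂‖ := by
  have hflux₁ := h₁.norm_invTransmission_sq_mul hs
  have hflux₂ := h₂.norm_invTransmission_sq_mul hs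
  rw [hR] at hflux₁
  refine (sq_eq_sq₀ (norm_nonneg _) (norm_nonneg _)).1 ?_
  exact mul_right_cancel₀ (right_ne_zero_of_mul_eq_one hflux₁) (hflux₁.trans hflux₂.symm)

namespace IsJostFamily

variable {q₁ q₂ : ℝ → ℝ} {u v u₁ v₁ u₂ v₂ : ℂ → ℝ → ℂ}

lemma tendsto_reflectionCoeff_div (h : IsJostFamily q u v) :
    Tendsto (fun t : ℝ ↦ reflectionCoeff q (t * I) (u (t * I)) (v (t * I)) / (t * I)) (𝓝[≠] 0)
      (𝓝 ((∫ x, q x : ℝ) / 2)) := by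
  have hs : Tendsto (fun t : ℝ ↦ (t : ℂ) * I) (𝓝[≠] 0) (𝓝 0) := by
    have hcont : Continuous fun t : ℝ ↦ (t : ℂ) * I := by fun_prop
    simpa using (hcont.tendsto 0).mono_left nhdsWithin_le_nhds
  have hpair : ∀ᶠ t : ℝ in 𝓝[≠] 0, IsJostPair q (t * I) (u (t * I)) (v (t * I)) :=
    eventually_nhdsWithin_of_forall fun t ht ↦ h.isJostPair_mul_I ht
  have hB := tendsto_bornIntegral_of_tendsto_zero hpair hs (.of_forall fun t ↦ by simp)
    h.isPotential.integrable
  have hG := tendsto_invTransmission_of_tendsto_zero hpair hs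
  have hlim := hB.div (hG.const_mul 2) (by simp)
  rw [mul_one] at hlim
  refine hlim.congr' (hpair.mono fun t ht ↦ ?_)
  simp only [Pi.div_apply, reflectionCoeff]
  rw [mul_div_assoc, mul_div_cancel_left₀ _ ht.ne_zero]

lemma integral_eq_of_reflectionCoeff_eq (h₁ : IsJostFamily q₁ u₁ v₁) (h₂ : IsJostFamily q₂ u₂ v₂)
    (hR : ∀ t : ℝ, t ≠ 0 → reflectionCoeff q₁ (t * I) (u₁ (t * I)) (v₁ (t * I)) =
      reflectionCoeff q₂ (t * I) (u₂ (t * I)) (v₂ (t * I))) :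
    ∫ x, q₁ x = ∫ x, q₂ x := by
  have hlim₁ := h₁.tendsto_reflectionCoeff_div.congr'
    (eventually_nhdsWithin_of_forall fun t ht ↦ by rw [hR t ht])
  have heq := tendsto_nhds_unique hlim₁ h₂.tendsto_reflectionCoeff_div
  exact_mod_cast (div_left_inj' two_ne_zero).1 heq

/-- Half the difference of the phases: `exp (s * halfPhaseDiff s)` is the ratio of the two
transmission coefficients. -/
def halfPhaseDiff (q₁ : ℝ → ℝ) (u₁ v₁ : ℂ → ℝ → ℂ) (q₂ : ℝ → ℝ) (u₂ v₂ : ℂ → ℝ → ℂ) (s : ℂ) : ℂ :=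
  (phase q₁ (u₁ s) (v₁ s) - phase q₂ (u₂ s) (v₂ s)) / 2

lemma exp_mul_halfPhaseDiff (s : ℂ) : exp (s * halfPhaseDiff q₁ u₁ v₁ q₂ u₂ v₂ s) =
    (invTransmission q₁ s (u₁ s) (v₁ s))⁻¹ * invTransmission q₂ s (u₂ s) (v₂ s) := by
  rw [invTransmission, invTransmission, ← Complex.exp_neg, ← Complex.exp_add, halfPhaseDiff]
  congr 1
  ring

lemma re_halfPhaseDiff_le {a : ℂ} (h₁ : IsJostFamily q₁ u₁ v₁) (h₂ : IsJostFamily q₂ u₂ v₂)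
    (hR : ∀ t : ℝ, t ≠ 0 → reflectionCoeff q₁ (t * I) (u₁ (t * I)) (v₁ (t * I)) =
      reflectionCoeff q₂ (t * I) (u₂ (t * I)) (v₂ (t * I)))
    (hlim : Tendsto (fun x : ℝ ↦ halfPhaseDiff q₁ u₁ v₁ q₂ u₂ v₂ x) atTop (𝓝 a))
    {x : ℝ} (hx : 0 < x) : (halfPhaseDiff q₁ u₁ v₁ q₂ u₂ v₂ x).re ≤ a.re := by
  refine re_le_re_of_norm_cexp_le_one (A := (∫ y, |q₁ y|) + ∫ y, |q₂ y|) ?_ (fun s hs ↦ ?_)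
    (fun t ↦ ?_) hlim hx
  · simp only [exp_mul_halfPhaseDiff]
    exact (h₁.diffContOnCl_invTransmission.inv fun _ _ ↦ invTransmission_ne_zero _ _ _ _).smul
      h₂.diffContOnCl_invTransmission
  · have hle := norm_sub_le (phase q₁ (u₁ s) (v₁ s)) (phase q₂ (u₂ s) (v₂ s))
    rw [halfPhaseDiff, norm_div, Complex.norm_ofNat]
    linarith [(h₁.isJostPair_of_pos hs).norm_phase_le, (h₂.isJostPair_of_pos hs).norm_phase_le]
  · rcases eq_or_ne t 0 with rfl | ht
    · simp
    · rw [exp_mul_halfPhaseDiff, norm_mul, norm_inv, norm_invTransmission_eq_of_reflectionCoeff_eq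
        (h₁.isJostPair_mul_I ht) (h₂.isJostPair_mul_I ht) (by simp) (hR t ht)]
      exact inv_mul_le_one

lemma tendsto_phase_nhdsGT_zero (h : IsJostFamily q u v) :
    Tendsto (fun x : ℝ ↦ phase q (u x) (v x)) (𝓝[>] 0) (𝓝 (∫ x, q x : ℝ)) := by
  refine tendsto_phase_of_tendsto_zero (s := fun x : ℝ ↦ (x : ℂ))
    (eventually_nhdsWithin_of_forall fun x hx ↦ h.isJostPair_of_pos (by simpa using hx)) ?_
  simpa using (Complex.continuous_ofReal.tendsto 0).mono_left nhdsWithin_le_nhds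

variable {n₁ n₂ : ℝ → ℝ} {m₁ m₂ M₁ M₂ : ℝ}

lemma integral_one_sub_le_of_reflectionCoeff_eq
    (hn₁ : IsRefractiveIndex n₁ m₁ M₁) (hn₂ : IsRefractiveIndex n₂ m₂ M₂)
    (h₁ : IsJostFamily (fun x ↦ 1 - n₁ x ^ 2) u₁ v₁)
    (h₂ : IsJostFamily (fun x ↦ 1 - n₂ x ^ 2) u₂ v₂)
    (hR : ∀ t : ℝ, t ≠ 0 →
      reflectionCoeff (fun x ↦ 1 - n₁ x ^ 2) (t * I) (u₁ (t * I)) (v₁ (t * I)) =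
        reflectionCoeff (fun x ↦ 1 - n₂ x ^ 2) (t * I) (u₂ (t * I)) (v₂ (t * I))) :
    ∫ x, (1 - n₂ x) ≤ ∫ x, (1 - n₁ x) := by
  have htop := ((hn₁.tendsto_phase_atTop fun s hs ↦ h₁.isJostPair_of_pos (by simpa using hs)).sub
    (hn₂.tendsto_phase_atTop fun s hs ↦ h₂.isJostPair_of_pos (by simpa using hs))).div_const 2
  have hzero := (h₁.tendsto_phase_nhdsGT_zero.sub h₂.tendsto_phase_nhdsGT_zero).div_const 2
  rw [h₁.integral_eq_of_reflectionCoeff_eq h₂ hR, sub_self, zero_div] at hzero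
  have hle := le_of_tendsto ((Complex.continuous_re.tendsto 0).comp hzero)
    (eventually_nhdsWithin_of_forall fun x hx ↦ re_halfPhaseDiff_le h₁ h₂ hR htop hx)
  rw [Complex.zero_re, ← Complex.ofReal_sub, ← Complex.ofReal_ofNat, ← Complex.ofReal_div,
    Complex.ofReal_re] at hle
  linarith

lemma integral_one_sub_eq_of_reflectionCoeff_eq
    (hn₁ : IsRefractiveIndex n₁ m₁ M₁) (hn₂ : IsRefractiveIndex n₂ m₂ M₂)
    (h₁ : IsJostFamily (fun x ↦ 1 - n₁ x ^ 2) u₁ v₁)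
    (h₂ : IsJostFamily (fun x ↦ 1 - n₂ x ^ 2) u₂ v₂)
    (hR : ∀ t : ℝ, t ≠ 0 →
      reflectionCoeff (fun x ↦ 1 - n₁ x ^ 2) (t * I) (u₁ (t * I)) (v₁ (t * I)) =
        reflectionCoeff (fun x ↦ 1 - n₂ x ^ 2) (t * I) (u₂ (t * I)) (v₂ (t * I))) :
    ∫ x, (1 - n₁ x) = ∫ x, (1 - n₂ x) :=
  le_antisymm
    (integral_one_sub_le_of_reflectionCoeff_eq hn₂ hn₁ h₂ h₁ fun t ht ↦ (hR t ht).symm)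
    (integral_one_sub_le_of_reflectionCoeff_eq hn₁ hn₂ h₁ h₂ hR)

end IsJostFamily

/-! ### The Helmholtz equation -/

section SoundSpeed

variable {c : ℝ → ℝ} {m M : ℝ}

lemma exists_isRefractiveIndex (h : HypH1 c) (hQ : Integrable (Qfun c)) :
    ∃ m M, IsRefractiveIndex (fun x ↦ 1 / c x) m M := by
  obtain ⟨c₀, hc₀, cM, hcM, hc⟩ := h
  exact ⟨1 / cM, 1 / c₀, one_div_pos.2 hcM,
    hc.mono fun x hx ↦ one_div_le_one_div_of_le (hc₀.trans hx.1) hx.2,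
    hc.mono fun x hx ↦ one_div_le_one_div_of_le hc₀ hx.1.le, hQ⟩

lemma integrable_Qfun (hm : Measurable c) (h₁ : HypH1 c) (h₂ : HypH2 c) :
    Integrable (Qfun c) := by
  obtain ⟨c₀, hc₀, _, _, hc⟩ := h₁
  obtain ⟨C, _, δ, hδ, hdecay⟩ := h₂
  have hint : Integrable (fun x : ℝ ↦ (1 + x ^ 2) ^ (-(1 + δ) / 2)) := by
    simpa using integrable_rpow_neg_one_add_norm_sq (E := ℝ) (μ := volume) (r := 1 + δ)
      (by simpa using hδ)
  refine (hint.const_mul (1 / c₀ * C)).mono'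
    (measurable_const.sub (measurable_const.div hm)).aestronglyMeasurable ?_
  filter_upwards [hc, hdecay] with x hx hxd
  have hpos : 0 < c x := hc₀.trans hx.1
  have hQ : Qfun c x = 1 / c x * (c x - 1) := by
    rw [Qfun]
    field_simp
  rw [hQ, norm_mul, Real.norm_of_nonneg (by positivity), Real.norm_eq_abs, mul_assoc]
  gcongr
  exact hx.1.le

lemma IsRefractiveIndex.isBigO_one {n : ℝ → ℝ} (hn : IsRefractiveIndex n m M)
    (hu : Continuous u) (s : ℂ) (x : ℝ) :
    (fun y ↦ s ^ 2 * (n y : ℂ) ^ 2 * u y) =O[𝓝 x ⊓ ae volume] (fun _ ↦ (1 : ℝ)) := by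
  have hnO : (fun y ↦ (n y : ℂ)) =O[𝓝 x ⊓ ae volume] (fun _ ↦ (1 : ℝ)) := by
    refine .of_bound M (mem_inf_of_right ?_)
    filter_upwards [hn.ae_pos, hn.upper] with y hpos hM
    simpa [abs_of_pos hpos] using hM
  simpa only [one_pow, mul_one] using ((hnO.pow 2).const_mul_left (s ^ 2)).mul
    (((hu.tendsto x).isBigO_one ℝ).mono inf_le_left)

lemma isSolution_of_solvesHelmholtz (hn : IsRefractiveIndex (fun x ↦ 1 / c x) m M) (hs : s ≠ 0)
    (h : SolvesHelmholtz c (I * s) u) :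
    IsSolution (fun x ↦ 1 - (1 / c x) ^ 2) s u (fun x ↦ -deriv u x / s) := by
  obtain ⟨hu, hode⟩ := h
  set g : ℝ → ℂ := fun x ↦ s ^ 2 * ((1 / c x : ℝ) : ℂ) ^ 2 * u x
  have hO := hn.isBigO_one hu.continuous s
  have hnm : AEStronglyMeasurable fun x ↦ ((1 / c x : ℝ) : ℂ) :=
    Complex.continuous_ofReal.comp_aestronglyMeasurable hn.aestronglyMeasurable
  have hg : LocallyIntegrable g := locallyIntegrable_of_isBigO_one
    (((hnm.pow 2).const_mul (s ^ 2)).mul hu.continuous.aestronglyMeasurable) hO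
  have hv : (fun x ↦ -deriv u x / s) = fun x ↦ -1 / s * (deriv u 0 + ∫ t in (0 : ℝ)..x, g t) := by
    funext x
    have hcoef (t : ℝ) : -((I * s) ^ 2 / (c t : ℂ) ^ 2) * u t = g t := by
      simp only [g, mul_pow, Complex.I_sq]
      push_cast
      ring
    rw [hode 0 x]
    simp only [hcoef]
    ring
  refine ⟨hu.locallyLipschitz, ?_, .of_forall fun x ↦ ?_, ?_⟩
  · rw [hv]
    exact locallyLipschitz_mul (.const _)
      ((LocallyLipschitz.const _).add (locallyLipschitz_intervalIntegral hg hO 0))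
  · refine (hu.differentiable one_ne_zero x).hasDerivAt.congr_deriv ?_
    field_simp
  · rw [hv]
    filter_upwards [LocallyIntegrable.ae_hasDerivAt_integral hg] with x hx
    refine (((hx 0).const_add (deriv u 0)).const_mul (-1 / s)).congr_deriv ?_
    simp only [g]
    push_cast
    field_simp
    ring

lemma isJostPair_of_isJostPlus (hn : IsRefractiveIndex (fun x ↦ 1 / c x) m M) (hre : 0 ≤ s.re)
    (hs : s ≠ 0) (h : IsJostPlus c (I * s) u) :
    IsJostPair (fun x ↦ 1 - (1 / c x) ^ 2) s u (fun x ↦ -deriv u x / s) where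
  toIsSolution := isSolution_of_solvesHelmholtz hn hs h.1
  potential := hn.isPotential
  re_nonneg := hre
  ne_zero := hs
  tendsto_atTop := h.2.congr fun x ↦ by
    congr 2
    linear_combination -s * x * Complex.I_mul_I

lemma isJostFamily_of_isJostPlus (hn : IsRefractiveIndex (fun x ↦ 1 / c x) m M)
    {U : ℂ → ℝ → ℂ} (hU : ∀ k : ℂ, 0 ≤ k.im → IsJostPlus c k (U k)) (hreg : JostFamilyRegular U) :
    IsJostFamily (fun x ↦ 1 - (1 / c x) ^ 2) (fun s ↦ U (I * s))
      (fun s x ↦ -deriv (U (I * s)) x / s) := by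
  have hI : Differentiable ℂ fun s : ℂ ↦ I * s := by fun_prop
  have hpos : Set.MapsTo (fun s : ℂ ↦ I * s) {s | 0 < s.re} {k | 0 < k.im} :=
    fun s hs ↦ by simpa using hs
  have hnonneg : Set.MapsTo (fun s : ℂ ↦ I * s) ({s | 0 ≤ s.re} \ {0}) {k | 0 ≤ k.im} :=
    fun s hs ↦ by simpa using hs.1
  refine ⟨fun s hre hs ↦ isJostPair_of_isJostPlus hn hre hs (hU _ (by simpa using hre)),
    fun x ↦ ?_, fun x ↦ ?_, fun x ↦ ?_, fun x ↦ ?_⟩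
  · exact (hreg x).1.comp hI.differentiableOn hpos
  · exact ((hreg x).2.2.1.comp hI.differentiableOn hpos).neg.div differentiableOn_id
      (by rintro s (hs : 0 < s.re) rfl; exact lt_irrefl _ hs)
  · exact (hreg x).2.1.comp hI.continuous.continuousOn hnonneg
  · exact ((hreg x).2.2.2.comp hI.continuous.continuousOn hnonneg).neg.div continuousOn_id
      fun s hs ↦ hs.2

lemma reflectionCoeff_eq_of_scattering_relation {U W : ℂ → ℝ → ℂ} {v : ℂ → ℝ → ℂ} {T R : ℝ → ℂ}
    (h : IsJostFamily q (fun s ↦ U (I * s)) v)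
    (hW : ∀ k : ℝ, k ≠ 0 → IsJostMinus c k (W k)) (hT : ∀ k : ℝ, k ≠ 0 → T k ≠ 0)
    (hrel : ∀ k : ℝ, k ≠ 0 → ∀ x : ℝ,
      U (k : ℂ) x = (R k / T k) * W (k : ℂ) x + (1 / T k) * conj (W (k : ℂ) x))
    {t : ℝ} (ht : t ≠ 0) : reflectionCoeff q (t * I) (U (I * (t * I))) (v (t * I)) = R (-t) := by
  have hk : I * (t * I) = ((-t : ℝ) : ℂ) := by
    push_cast
    linear_combination t * Complex.I_mul_I
  have hw : Tendsto (fun x : ℝ ↦ exp (-(t * I) * x) * W ((-t : ℝ) : ℂ) x) atBot (𝓝 1) := by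
    refine (hW (-t) (neg_ne_zero.2 ht)).2.congr fun x ↦ ?_
    congr 2
    push_cast
    ring
  have hT' := hT (-t) (neg_ne_zero.2 ht)
  rw [(h.isJostPair_mul_I ht).reflectionCoeff_eq (by simp) hw
    (by simpa only [hk] using hrel (-t) (neg_ne_zero.2 ht))]
  field_simp

end SoundSpeed
end Helmholtz

open Helmholtz in
theorem reflection_determines_int_Q_general
    (c₁ c₂ : ℝ → ℝ) (h1₁ : HypH1 c₁) (h1₂ : HypH1 c₂)
    (hQ₁ : Integrable (Qfun c₁)) (hQ₂ : Integrable (Qfun c₂))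
    (U₁ U₂ V₁ V₂ : ℂ → ℝ → ℂ)
    (hU₁ : ∀ k : ℂ, 0 ≤ k.im → IsJostPlus c₁ k (U₁ k))
    (hU₂ : ∀ k : ℝ, k ≠ 0 → IsJostMinus c₁ k (U₂ k))
    (hV₁ : ∀ k : ℂ, 0 ≤ k.im → IsJostPlus c₂ k (V₁ k))
    (hV₂ : ∀ k : ℝ, k ≠ 0 → IsJostMinus c₂ k (V₂ k))
    (hregU₁ : JostFamilyRegular U₁) (hregV₁ : JostFamilyRegular V₁)
    (T₁ T₂ R₂₁ R₂₂ : ℝ → ℂ)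
    (hT₁ : ∀ k : ℝ, k ≠ 0 → T₁ k ≠ 0) (hT₂ : ∀ k : ℝ, k ≠ 0 → T₂ k ≠ 0)
    (hrel₁ : ∀ k : ℝ, k ≠ 0 → ∀ x : ℝ,
      U₁ (k : ℂ) x = (R₂₁ k / T₁ k) * U₂ (k : ℂ) x +
        (1 / T₁ k) * (starRingEnd ℂ) (U₂ (k : ℂ) x))
    (hrel₂ : ∀ k : ℝ, k ≠ 0 → ∀ x : ℝ,
      V₁ (k : ℂ) x = (R₂₂ k / T₂ k) * V₂ (k : ℂ) x +
        (1 / T₂ k) * (starRingEnd ℂ) (V₂ (k : ℂ) x))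
    (hR : ∀ k : ℝ, k ≠ 0 → R₂₁ k = R₂₂ k) :
    ∫ x : ℝ, Qfun c₁ x = ∫ x : ℝ, Qfun c₂ x := by
  obtain ⟨m₁, M₁, hn₁⟩ := exists_isRefractiveIndex h1₁ hQ₁
  obtain ⟨m₂, M₂, hn₂⟩ := exists_isRefractiveIndex h1₂ hQ₂
  have hF₁ := isJostFamily_of_isJostPlus hn₁ hU₁ hregU₁
  have hF₂ := isJostFamily_of_isJostPlus hn₂ hV₁ hregV₁
  refine IsJostFamily.integral_one_sub_eq_of_reflectionCoeff_eq hn₁ hn₂ hF₁ hF₂ fun t ht ↦ ?_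
  rw [reflectionCoeff_eq_of_scattering_relation hF₁ hU₂ hT₁ hrel₁ ht,
    reflectionCoeff_eq_of_scattering_relation hF₂ hV₂ hT₂ hrel₂ ht, hR (-t) (neg_ne_zero.2 ht)]

/-- If the reflection coefficients of `c₁` and `c₂` coincide then `∫ Q₁ = ∫ Q₂`. -/
theorem reflection_determines_int_Q
    (c₁ c₂ : ℝ → ℝ) (hm₁ : Measurable c₁) (hm₂ : Measurable c₂)
    (h1₁ : HypH1 c₁) (h2₁ : HypH2 c₁) (h1₂ : HypH1 c₂) (h2₂ : HypH2 c₂)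
    (U₁ U₂ V₁ V₂ : ℂ → ℝ → ℂ)
    (hU₁ : ∀ k : ℂ, 0 ≤ k.im → IsJostPlus c₁ k (U₁ k))
    (hU₂ : ∀ k : ℂ, 0 ≤ k.im → IsJostMinus c₁ k (U₂ k))
    (hV₁ : ∀ k : ℂ, 0 ≤ k.im → IsJostPlus c₂ k (V₁ k))
    (hV₂ : ∀ k : ℂ, 0 ≤ k.im → IsJostMinus c₂ k (V₂ k))
    (hregU₁ : JostFamilyRegular U₁) (hregU₂ : JostFamilyRegular U₂)
    (hregV₁ : JostFamilyRegular V₁) (hregV₂ : JostFamilyRegular V₂)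
    (T₁ T₂ R₂₁ R₂₂ : ℝ → ℂ)
    (hT₁ : ∀ k : ℝ, k ≠ 0 → T₁ k ≠ 0) (hT₂ : ∀ k : ℝ, k ≠ 0 → T₂ k ≠ 0)
    (hrel₁ : ∀ k : ℝ, k ≠ 0 → ∀ x : ℝ,
      U₁ (k : ℂ) x = (R₂₁ k / T₁ k) * U₂ (k : ℂ) x +
        (1 / T₁ k) * (starRingEnd ℂ) (U₂ (k : ℂ) x))
    (hrel₂ : ∀ k : ℝ, k ≠ 0 → ∀ x : ℝ,
      V₁ (k : ℂ) x = (R₂₂ k / T₂ k) * V₂ (k : ℂ) x +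
        (1 / T₂ k) * (starRingEnd ℂ) (V₂ (k : ℂ) x))
    (hR : ∀ k : ℝ, k ≠ 0 → R₂₁ k = R₂₂ k) :
    ∫ x : ℝ, Qfun c₁ x = ∫ x : ℝ, Qfun c₂ x := by
  have hreal (k : ℝ) : 0 ≤ (k : ℂ).im := (Complex.ofReal_im k).ge
  exact reflection_determines_int_Q_general c₁ c₂ h1₁ h1₂
    (Helmholtz.integrable_Qfun hm₁ h1₁ h2₁) (Helmholtz.integrable_Qfun hm₂ h1₂ h2₂) U₁ U₂ V₁ V₂
    hU₁ (fun k _ ↦ hU₂ k (hreal k)) hV₁ (fun k _ ↦ hV₂ k (hreal k)) hregU₁ hregV₁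
    T₁ T₂ R₂₁ R₂₂ hT₁ hT₂ hrel₁ hrel₂ hR
end
end
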